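/- arXiv:1808.03696 — 11 statements merged into one kernel-verified Lean document; each statement's English description precedes it below -/
import Mathlib

section
/- Let G be a finite simple graph containing an edge uv such that: exactly one connected component of G contains an edge; the vertex set of this component is U ∪ V, where U and V are disjoint independent sets of G with u ∈ U and v ∈ V; and every vertex of U ∪ V has a neighbor in N(u) ∪ N(v). Then for any two distinct vertices v′, v″ ∈ V, the distance between v′ and v″ in G is either 2 or 4, and consequently the graph obtained from G by adding the edge v′v″ contains a cycle of length 3 or a cycle of length 5. The same conclusion holds for any two distinct vertices of U. -/
open SimpleGraph

/-- `G` contains a cycle of length `m`. -/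
def hasCycleLength {α : Type*} (G : SimpleGraph α) (m : ℕ) : Prop :=
  ∃ (a : α) (w : G.Walk a a), w.IsCycle ∧ w.length = m

/-- The graph obtained from `G` by adding the edge `xy`. -/
def addEdge {α : Type*} (G : SimpleGraph α) (x y : α) : SimpleGraph α :=
  G ⊔ SimpleGraph.fromEdgeSet {s(x, y)}

/-!
A walk starting in `V` alternates between `V` and `U`, so two vertices of `V` lie at even distance.
A neighbour in `N(u) ∪ N(v)` of a vertex of `V` lies in `U`, hence in `N(v)`; so every vertex of `V`
is within distance two of `v`, and two distinct ones are at distance two or four. A shortest path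
between them is closed by the new edge to a cycle of length three or five.
-/

/-- `S` and `T` are disjoint and every edge of `G` meeting `S ∪ T` joins `S` to `T`: thus `S ∪ T` is
a union of connected components, on which `G` is bipartite with parts `S` and `T`. Nothing is
required of the other components, in contrast to `SimpleGraph.IsBipartiteWith`. -/
structure IsBipartiteOn {α : Type*} (G : SimpleGraph α) (S T : Set α) : Prop where
  disjoint : Disjoint S T
  mem_right_of_adj ⦃a b : α⦄ : a ∈ S → G.Adj a b → b ∈ T
  mem_left_of_adj ⦃a b : α⦄ : a ∈ T → G.Adj a b → b ∈ S

section

variable {α : Type*} {G : SimpleGraph α} {S T : Set α} {x y : α}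

theorem hasCycleLength_addEdge_of_isPath {p : G.Walk x y} (hp : p.IsPath) (hxy : x ≠ y)
    (hnew : s(x, y) ∉ p.edges) : hasCycleLength (addEdge G x y) (p.length + 1) := by
  have hle : G ≤ addEdge G x y := le_sup_left
  have hadj : (addEdge G x y).Adj y x := Or.inr ⟨Sym2.eq_swap, hxy.symm⟩
  refine ⟨y, .cons hadj (p.mapLe hle), (Walk.cons_isCycle_iff _ _).2 ⟨hp.mapLe hle, ?_⟩, ?_⟩
  · rwa [Walk.edges_mapLe_eq_edges, Sym2.eq_swap]
  · rw [Walk.length_cons, Walk.length_mapLe]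

theorem hasCycleLength_addEdge_dist_add_one (hr : G.Reachable x y) (hxy : x ≠ y)
    (hnadj : ¬ G.Adj x y) : hasCycleLength (addEdge G x y) (G.dist x y + 1) := by
  obtain ⟨p, hp, hlen⟩ := hr.exists_path_of_dist
  exact hlen ▸ hasCycleLength_addEdge_of_isPath hp hxy fun h => hnadj (p.adj_of_mem_edges h)

theorem edist_le_two_of_mem_commonNeighbors {z : α} (hz : z ∈ G.commonNeighbors x y) :
    G.edist x y ≤ 2 :=
  Walk.edist_le (.cons hz.1 (.cons hz.2.symm .nil))

theorem isBipartiteOn_of_supp_eq_union (C : G.ConnectedComponent) (hC : C.supp = S ∪ T)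
    (hd : Disjoint S T) (hS : G.IsIndepSet S) (hT : G.IsIndepSet T) : IsBipartiteOn G S T := by
  have hclosed : ∀ ⦃a b⦄, a ∈ S ∪ T → G.Adj a b → b ∈ S ∪ T := fun a b ha hab =>
    hC ▸ C.mem_supp_of_adj_mem_supp (hC ▸ ha) hab
  exact
    { disjoint := hd
      mem_right_of_adj := fun a b ha hab =>
        (hclosed (.inl ha) hab).resolve_left fun hb => hS ha hb hab.ne hab
      mem_left_of_adj := fun a b ha hab =>
        (hclosed (.inr ha) hab).resolve_right fun hb => hT ha hb hab.ne hab }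

namespace IsBipartiteOn

theorem symm (h : IsBipartiteOn G S T) : IsBipartiteOn G T S :=
  ⟨h.disjoint.symm, h.mem_left_of_adj, h.mem_right_of_adj⟩

theorem not_adj (h : IsBipartiteOn G S T) (hx : x ∈ S) (hy : y ∈ S) : ¬ G.Adj x y := fun hxy =>
  Set.disjoint_left.1 h.disjoint hy (h.mem_right_of_adj hx hxy)

theorem mem_of_walk (h : IsBipartiteOn G S T) (p : G.Walk x y) (hx : x ∈ S) :
    (Even p.length → y ∈ S) ∧ (Odd p.length → y ∈ T) := by
  induction p generalizing S T with
  | nil => simpa using hx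
  | cons hadj p ih =>
    obtain ⟨heven, hodd⟩ := ih h.symm (h.mem_right_of_adj hx hadj)
    rw [Walk.length_cons, Nat.even_add_one, Nat.odd_add_one, Nat.not_even_iff_odd,
      Nat.not_odd_iff_even]
    exact ⟨hodd, heven⟩

theorem even_length (h : IsBipartiteOn G S T) (p : G.Walk x y) (hx : x ∈ S) (hy : y ∈ S) :
    Even p.length :=
  Nat.not_odd_iff_even.1 fun hodd =>
    Set.disjoint_left.1 h.disjoint hy ((h.mem_of_walk p hx).2 hodd)

theorem even_dist (h : IsBipartiteOn G S T) (hx : x ∈ S) (hy : y ∈ S) : Even (G.dist x y) := by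
  by_cases hr : G.Reachable x y
  · obtain ⟨p, hp⟩ := hr.exists_walk_length_eq_dist
    exact hp ▸ h.even_length p hx hy
  · simp [dist_eq_zero_of_not_reachable hr]

theorem edist_le_two (h : IsBipartiteOn G S T) {s t z : α} (ht : t ∈ T) (hx : x ∈ S)
    (hz : z ∈ G.neighborSet s ∪ G.neighborSet t) (hxz : G.Adj x z) : G.edist x s ≤ 2 := by
  have hzT : z ∈ T := h.mem_right_of_adj hx hxz
  have hzs : G.Adj s z := hz.resolve_right fun htz => h.symm.not_adj ht hzT htz
  exact edist_le_two_of_mem_commonNeighbors ⟨hxz, hzs⟩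

theorem dist_eq_two_or_four (h : IsBipartiteOn G S T) (hx : x ∈ S) (hy : y ∈ S) (hxy : x ≠ y)
    (hr : G.Reachable x y) (hle : G.dist x y ≤ 4) : G.dist x y = 2 ∨ G.dist x y = 4 := by
  have hpos : 0 < G.dist x y := hr.pos_dist_of_ne hxy
  obtain ⟨k, hk⟩ := h.even_dist hx hy
  omega

theorem dist_and_hasCycleLength (h : IsBipartiteOn G S T) {s : α}
    (hs : ∀ x ∈ S, G.edist x s ≤ 2) (hx : x ∈ S) (hy : y ∈ S) (hxy : x ≠ y) :
    (G.dist x y = 2 ∨ G.dist x y = 4) ∧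
      (hasCycleLength (addEdge G x y) 3 ∨ hasCycleLength (addEdge G x y) 5) := by
  have hle : G.edist x y ≤ 4 := calc
    G.edist x y ≤ G.edist x s + G.edist s y := G.edist_triangle
    _ ≤ 2 + 2 := add_le_add (hs x hx) (G.edist_comm ▸ hs y hy)
    _ = 4 := by norm_num
  have hr : G.Reachable x y := reachable_of_edist_ne_top (ne_top_of_le_ne_top (by simp) hle)
  have hdist : G.dist x y = 2 ∨ G.dist x y = 4 :=
    h.dist_eq_two_or_four hx hy hxy hr (by exact_mod_cast hr.coe_dist_eq_edist ▸ hle)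
  have hcycle := hasCycleLength_addEdge_dist_add_one hr hxy (h.not_adj hx hy)
  exact ⟨hdist, hdist.imp (fun h2 => by rwa [h2] at hcycle) (fun h4 => by rwa [h4] at hcycle)⟩

end IsBipartiteOn

end

theorem stmt_0_general {α : Type*} (G : SimpleGraph α) (u v : α) (U V : Set α)
    (hUV : {w | G.connectedComponentMk w = G.connectedComponentMk u} = U ∪ V)
    (hdisj : Disjoint U V)
    (hUind : ∀ a ∈ U, ∀ b ∈ U, ¬ G.Adj a b)
    (hVind : ∀ a ∈ V, ∀ b ∈ V, ¬ G.Adj a b)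
    (huU : u ∈ U) (hvV : v ∈ V)
    (hnbr : ∀ w ∈ U ∪ V, ∃ z ∈ G.neighborSet u ∪ G.neighborSet v, G.Adj w z) :
    (∀ v' ∈ V, ∀ v'' ∈ V, v' ≠ v'' →
      (G.dist v' v'' = 2 ∨ G.dist v' v'' = 4) ∧
      (hasCycleLength (addEdge G v' v'') 3 ∨ hasCycleLength (addEdge G v' v'') 5)) ∧
    (∀ u' ∈ U, ∀ u'' ∈ U, u' ≠ u'' →
      (G.dist u' u'' = 2 ∨ G.dist u' u'' = 4) ∧
      (hasCycleLength (addEdge G u' u'') 3 ∨ hasCycleLength (addEdge G u' u'') 5)) := by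
  have h : IsBipartiteOn G U V := isBipartiteOn_of_supp_eq_union (G.connectedComponentMk u) hUV
    hdisj (fun a ha b hb _ => hUind a ha b hb) (fun a ha b hb _ => hVind a ha b hb)
  have hdistU : ∀ x ∈ U, G.edist x u ≤ 2 := fun x hx =>
    let ⟨_, hz, hxz⟩ := hnbr x (.inl hx)
    h.edist_le_two hvV hx hz hxz
  have hdistV : ∀ x ∈ V, G.edist x v ≤ 2 := fun x hx =>
    let ⟨_, hz, hxz⟩ := hnbr x (.inr hx)
    h.symm.edist_le_two huU hx hz.symm hxz
  exact ⟨fun _ hx _ hy hxy => h.symm.dist_and_hasCycleLength hdistV hx hy hxy,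
    fun _ hx _ hy hxy => h.dist_and_hasCycleLength hdistU hx hy hxy⟩

theorem stmt_0 {α : Type*} [Fintype α] (G : SimpleGraph α) (u v : α) (U V : Set α)
    (huv : G.Adj u v)
    (hcomp : ∃! c : G.ConnectedComponent, ∃ x y, G.Adj x y ∧ G.connectedComponentMk x = c)
    (hUV : {w | G.connectedComponentMk w = G.connectedComponentMk u} = U ∪ V)
    (hdisj : Disjoint U V)
    (hUind : ∀ a ∈ U, ∀ b ∈ U, ¬ G.Adj a b)
    (hVind : ∀ a ∈ V, ∀ b ∈ V, ¬ G.Adj a b)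
    (huU : u ∈ U) (hvV : v ∈ V)
    (hnbr : ∀ w ∈ U ∪ V, ∃ z ∈ G.neighborSet u ∪ G.neighborSet v, G.Adj w z) :
    (∀ v' ∈ V, ∀ v'' ∈ V, v' ≠ v'' →
      (G.dist v' v'' = 2 ∨ G.dist v' v'' = 4) ∧
      (hasCycleLength (addEdge G v' v'') 3 ∨ hasCycleLength (addEdge G v' v'') 5)) ∧
    (∀ u' ∈ U, ∀ u'' ∈ U, u' ≠ u'' →
      (G.dist u' u'' = 2 ∨ G.dist u' u'' = 4) ∧
      (hasCycleLength (addEdge G u' u'') 3 ∨ hasCycleLength (addEdge G u' u'') 5)) :=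
  stmt_0_general G u v U V hUV hdisj hUind hVind huU hvV hnbr
end

section
/- Let G be a finite simple graph that is 2-good and contains no odd cycle of length at least 5 (i.e., no cycle C_{2j+1} for any j ≥ 2). Then G contains no cycle of length at least 5 at all, i.e., no cycle C_m for any m ≥ 5. -/
open SimpleGraph

/-- A vertex `w` of `H` is good if all but at most one of the edges of `H` incident
to `w` are contained in a triangle of `H`. -/
def goodVertex {α : Type*} (H : SimpleGraph α) (w : α) : Prop :=
  {z | H.Adj w z ∧ ¬ ∃ t, H.Adj w t ∧ H.Adj z t}.Subsingleton

/-- `G` is `k`-good: there is a set `B` of at most `k` edges of `G` such that every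
vertex of `G − B` is good in `G − B`. -/
def kGood {α : Type*} (G : SimpleGraph α) (k : ℕ) : Prop :=
  ∃ B : Set (Sym2 α), B ⊆ G.edgeSet ∧ B.ncard ≤ k ∧ ∀ w, goodVertex (G.deleteEdges B) w

/-!
Suppose `G` has no odd cycle of length at least `5`, and let `C` be a cycle of `G` of length at
least `5`, hence at least `6`. No edge `uv` of `C` lies in a triangle `uvt`: if `t` is off `C`, then
replacing `uv` by `utv` changes the parity of the length of `C`; if `t` is on `C`, then it cuts the
path `C - uv` into two parts, the longer of which has length at least `3` and closes up to an odd
cycle of length at least `5`, either through one side of the triangle `uvt` or through the other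
two. So a vertex of `C` is incident to two edges outside all triangles, and it can only become good
if an edge incident to it is deleted. As `b` edges meet at most `2 * b` vertices, deleting `b` edges
makes all vertices of `C` good only if `C` has length at most `2 * b`.
-/

/-- `G` contains an odd cycle of length at least `5`, the configuration that the parity arguments
produce. -/
def HasLongOddCycle {α : Type*} (G : SimpleGraph α) : Prop :=
  ∃ m, 5 ≤ m ∧ Odd m ∧ hasCycleLength G m

section Cycles

variable {α : Type*} {G : SimpleGraph α} {u v x : α}

theorem hasCycleLength_length_add_one_of_isPath {p : G.Walk u v} (hp : p.IsPath)
    (hlen : 2 ≤ p.length) (hvu : G.Adj v u) : hasCycleLength G (p.length + 1) :=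
  ⟨v, p.cons hvu, Walk.isCycle_iff_isPath_tail_and_le_length.mpr
    ⟨by simpa using hp, by simpa using hlen⟩, p.length_cons hvu⟩

theorem hasCycleLength_length_add_two_of_isPath {p : G.Walk u v} (hp : p.IsPath)
    (hlen : 1 ≤ p.length) (hx : x ∉ p.support) (hxu : G.Adj x u) (hvx : G.Adj v x) :
    hasCycleLength G (p.length + 2) :=
  hasCycleLength_length_add_one_of_isPath (hp.cons (h := hxu) hx) (by simpa using hlen) hvx

theorem hasLongOddCycle_of_triangle_of_notMem_support {p : G.Walk u v} (hp : p.IsPath)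
    (hlen : 3 ≤ p.length) (hvu : G.Adj v u) (hx : x ∉ p.support) (hxu : G.Adj x u)
    (hvx : G.Adj v x) : HasLongOddCycle G := by
  obtain heven | hodd := p.length.even_or_odd
  · exact ⟨_, by grind, heven.add_one, hasCycleLength_length_add_one_of_isPath hp (by lia) hvu⟩
  · exact ⟨_, by lia, hodd.add_even even_two,
      hasCycleLength_length_add_two_of_isPath hp (by lia) hx hxu hvx⟩

theorem hasLongOddCycle_of_isPath_of_triangle {p : G.Walk u v} (hp : p.IsPath)
    (hlen : 5 ≤ p.length) (hvu : G.Adj v u) (hxu : G.Adj x u) (hvx : G.Adj v x) :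
    HasLongOddCycle G := by
  by_cases hx : x ∈ p.support
  · obtain ⟨q, r, hq, hr, rfl⟩ := hp.mem_support_iff_exists_append.mp hx
    have hvq : v ∉ q.support := fun hv ↦
      hp.ne_of_mem_support_of_append hvx.ne hv r.end_mem_support rfl
    have hur : u ∉ r.support := fun hu ↦
      hp.ne_of_mem_support_of_append hxu.ne' q.start_mem_support hu rfl
    obtain hq3 | hr3 : 3 ≤ q.length ∨ 3 ≤ r.length := by
      rw [Walk.length_append] at hlen
      lia
    · exact hasLongOddCycle_of_triangle_of_notMem_support hq hq3 hxu hvq hvu hvx.symm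
    · exact hasLongOddCycle_of_triangle_of_notMem_support hr hr3 hvx hur hxu.symm hvu
  · exact hasLongOddCycle_of_triangle_of_notMem_support hp (by lia) hvu hx hxu hvx

theorem hasLongOddCycle_of_isCycle_of_triangle {c : G.Walk u u} (hc : c.IsCycle)
    (hlen : 6 ≤ c.length) (hux : G.Adj u x) (hx : G.Adj c.snd x) : HasLongOddCycle G := by
  have htail : c.tail.length + 1 = c.length := c.length_tail_add_one hc.not_nil
  exact hasLongOddCycle_of_isPath_of_triangle hc.isPath_tail (by lia) (c.adj_snd hc.not_nil)
    hx.symm hux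

theorem not_goodVertex_of_isCycle {c : G.Walk u u} (hc : c.IsCycle) (hlen : 6 ≤ c.length)
    (hG : ¬ HasLongOddCycle G) : ¬ goodVertex G u := by
  intro hgood
  have hsnd : ¬ ∃ x, G.Adj u x ∧ G.Adj c.snd x := fun ⟨_, hux, hx⟩ ↦
    hG (hasLongOddCycle_of_isCycle_of_triangle hc hlen hux hx)
  have hpenultimate : ¬ ∃ x, G.Adj u x ∧ G.Adj c.penultimate x := fun ⟨_, hux, hx⟩ ↦
    hG (hasLongOddCycle_of_isCycle_of_triangle hc.reverse (by simpa using hlen) hux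
      (by simpa using hx))
  exact hc.snd_ne_penultimate (hgood ⟨c.adj_snd hc.not_nil, hsnd⟩
    ⟨(c.adj_penultimate hc.not_nil).symm, hpenultimate⟩)

end Cycles

theorem goodVertex_of_le {α : Type*} {G H : SimpleGraph α} {w : α} (hHG : H ≤ G)
    (hnbhd : ∀ z, G.Adj w z → H.Adj w z) (hgood : goodVertex H w) : goodVertex G w :=
  hgood.anti fun z ⟨hwz, hz⟩ ↦
    ⟨hnbhd z hwz, fun ⟨x, hwx, hzx⟩ ↦ hz ⟨x, hHG hwx, hHG hzx⟩⟩

theorem goodVertex_of_deleteEdges {α : Type*} {G : SimpleGraph α} {B : Set (Sym2 α)} {w : α}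
    (hw : ∀ e ∈ B, w ∉ e) (hgood : goodVertex (G.deleteEdges B) w) : goodVertex G w :=
  goodVertex_of_le (G.deleteEdges_le B)
    (fun z hwz ↦ deleteEdges_adj.mpr ⟨hwz, fun hB ↦ hw _ hB (Sym2.mem_mk_left w z)⟩) hgood

theorem card_le_two_mul_card_of_forall_exists_mem {α : Type*} {s : Finset α}
    {B : Finset (Sym2 α)} (hcover : ∀ w ∈ s, ∃ e ∈ B, w ∈ e) : s.card ≤ 2 * B.card := by
  classical
  calc s.card ≤ (B.biUnion Sym2.toFinset).card :=
        Finset.card_le_card fun w hw ↦ by simpa using hcover w hw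
    _ ≤ B.card * 2 := Finset.card_biUnion_le_card_mul _ _ _ fun e _ ↦ by
        rw [Sym2.card_toFinset]
        split_ifs <;> lia
    _ = 2 * B.card := mul_comm _ _

theorem length_le_two_mul_card_of_isCycle {α : Type*} {G : SimpleGraph α} {u : α}
    {c : G.Walk u u} (hc : c.IsCycle) {B : Finset (Sym2 α)}
    (hcover : ∀ w ∈ c.support, ∃ e ∈ B, w ∈ e) : c.length ≤ 2 * B.card := by
  classical
  calc c.length = c.support.tail.toFinset.card := by
        rw [List.toFinset_card_of_nodup hc.support_nodup, List.length_tail, Walk.length_support,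
          Nat.add_sub_cancel]
    _ ≤ 2 * B.card := card_le_two_mul_card_of_forall_exists_mem fun w hw ↦
        hcover w (List.mem_of_mem_tail (List.mem_toFinset.mp hw))

theorem stmt_2_general {α : Type*} (G : SimpleGraph α) (B : Finset (Sym2 α))
    (hgood : ∀ w, goodVertex (G.deleteEdges (B : Set (Sym2 α))) w)
    (hnoodd : ∀ m, 5 ≤ m → Odd m → ¬ hasCycleLength G m) :
    ∀ m, 5 ≤ m → 2 * B.card < m → ¬ hasCycleLength G m := by
  classical
  rintro _ h5 hB ⟨a, c, hc, rfl⟩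
  have hG : ¬ HasLongOddCycle G := fun ⟨m, hm, hodd, hcycle⟩ ↦ hnoodd m hm hodd hcycle
  have hne5 : c.length ≠ 5 := fun h ↦ hnoodd 5 le_rfl (by decide) ⟨a, c, hc, h⟩
  have hcover : ∀ w ∈ c.support, ∃ e ∈ B, w ∈ e := by
    intro w hw
    by_contra! hwB
    exact not_goodVertex_of_isCycle (hc.rotate hw) (by rw [Walk.length_rotate]; lia) hG
      (goodVertex_of_deleteEdges hwB (hgood w))
  exact hB.not_ge (length_le_two_mul_card_of_isCycle hc hcover)

theorem stmt_2 {α : Type*} [Fintype α] (G : SimpleGraph α)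
    (h2good : kGood G 2)
    (hnoodd : ∀ m, 5 ≤ m → Odd m → ¬ hasCycleLength G m) :
    ∀ m, 5 ≤ m → ¬ hasCycleLength G m := by
  obtain ⟨B, -, hB, hgood⟩ := h2good
  lift B to Finset (Sym2 α) using B.toFinite
  rw [Set.ncard_coe_finset] at hB
  exact fun m hm ↦ stmt_2_general G B hgood hnoodd m hm (by lia)
end

section
/- Every finite simple graph G on n vertices that contains no cycle of length at least 5 (i.e., no cycle C_m for any m ≥ 5) has at most 2n − 2 edges. -/
open SimpleGraph

/-!
The bound is the case `k = 4` of the Erdős–Gallai circumference theorem: a graph on `n` vertices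
with no cycle longer than `k ≥ 2` has at most `k (n - 1) / 2` edges.

Among all longest paths `p₀ p₁ … p_ℓ`, take one whose first vertex has maximal degree `d`. The
neighbours of `p₀` lie on the path, and among `p₁, …, p_{k-1}`, since a neighbour further along
would close a long cycle. If `p₀` is adjacent to `p_{i+1}`, then the Pósa rotation
`p_i … p₀ p_{i+1} … p_ℓ` is again a longest path with the same first `k` vertices. So the set `W`
of the `d` vertices `p_i` obtained in this way lies in a set `Z` of at most `k` vertices which
contains all neighbours of `W`, and each vertex of `W` has degree at most `d`. Twice the number of
edges meeting `W` is the sum over `w ∈ W` of `deg w + |N(w) \ W| ≤ d + (k - d)`, so deleting `W`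
removes `d` vertices and at most `k d / 2` edges.
-/

section Circumference

open Finset

variable {V : Type*} {G : SimpleGraph V} {u v x : V} {p : G.Walk u v} {i k m : ℕ}

namespace hasCycleLength

theorem map {V' : Type*} {G' : SimpleGraph V'} {f : G →g G'} (hf : Function.Injective f)
    (h : hasCycleLength G m) : hasCycleLength G' m := by
  obtain ⟨a, c, hc, rfl⟩ := h
  exact ⟨f a, c.map f, (Walk.isCycle_map_iff_of_injective hf).2 hc, c.length_map f⟩

theorem of_adj_getVert (hp : p.IsPath) (h2 : 2 ≤ i) (hi : i ≤ p.length)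
    (hadj : G.Adj u (p.getVert i)) : hasCycleLength G (i + 1) := by
  have hlen : (p.take i).length = i := by rw [Walk.take_length, min_eq_left hi]
  refine ⟨_, .cons hadj.symm (p.take i), ?_, by rw [Walk.length_cons, hlen]⟩
  refine (Walk.cons_isCycle_iff _ _).2 ⟨hp.take i, fun hmem ↦ ?_⟩
  have := (hp.take i).length_eq_one_of_mem_edges (Sym2.eq_swap ▸ hmem)
  lia

end hasCycleLength

/-- Every cycle of `G` has length at most `k`, i.e. the circumference of `G` is at most `k`; true
of every acyclic graph. -/
def CircumferenceLE (G : SimpleGraph V) (k : ℕ) : Prop :=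
  ∀ m, k < m → ¬ hasCycleLength G m

theorem CircumferenceLE.induce (h : CircumferenceLE G k) (s : Set V) :
    CircumferenceLE (G.induce s) k :=
  fun m hm hcycle ↦ h m hm (hcycle.map (f := (Embedding.induce s).toHom) Subtype.val_injective)

section EdgeCount

variable [Fintype V] [DecidableEq V] [DecidableRel G.Adj]

theorem degree_induce_compl_add_card_filter_adj (W : Finset V) (a : ((W : Set V)ᶜ : Set V)) :
    (G.induce (W : Set V)ᶜ).degree a + #{w ∈ W | G.Adj w a} = G.degree a := by
  have houtside : (G.induce (W : Set V)ᶜ).degree a = #(G.neighborFinset a \ W) := by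
    rw [← card_neighborFinset_eq_degree, ← card_map, map_neighborFinset_induce]
    congr 1
    ext
    simp
  have hinside : ({w ∈ W | G.Adj w a} : Finset V) = G.neighborFinset a ∩ W := by
    ext
    simp [G.adj_comm, and_comm]
  rw [houtside, hinside, card_sdiff_add_card_inter, card_neighborFinset_eq_degree]

theorem sum_card_neighborFinset_sdiff (W : Finset V) :
    ∑ w ∈ W, #(G.neighborFinset w \ W) = ∑ a ∈ Wᶜ, #{w ∈ W | G.Adj w a} := by
  simp_rw [← bipartiteBelow.eq_def G.Adj]
  rw [← sum_card_bipartiteAbove_eq_sum_card_bipartiteBelow]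
  refine sum_congr rfl fun w _ ↦ congrArg card ?_
  ext
  simp [and_comm]

theorem two_mul_card_edgeFinset_eq_induce_compl_add (W : Finset V) :
    2 * #G.edgeFinset = 2 * #(G.induce (W : Set V)ᶜ).edgeFinset +
      ∑ w ∈ W, (G.degree w + #(G.neighborFinset w \ W)) := by
  have hcompl : ∑ a ∈ Wᶜ, G.degree a = 2 * #(G.induce (W : Set V)ᶜ).edgeFinset +
      ∑ a ∈ Wᶜ, #{w ∈ W | G.Adj w a} := by
    rw [← sum_degrees_eq_twice_card_edges]
    have hmem (a : V) : a ∈ Wᶜ ↔ a ∈ (W : Set V)ᶜ := by simp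
    rw [sum_subtype _ hmem, sum_subtype _ hmem, ← sum_add_distrib]
    exact sum_congr rfl fun a _ ↦ (degree_induce_compl_add_card_filter_adj W a).symm
  rw [← sum_degrees_eq_twice_card_edges, ← sum_add_sum_compl W, hcompl, sum_add_distrib,
    sum_card_neighborFinset_sdiff]
  ring

end EdgeCount

section LongestPath

/-- A path of maximal length among all paths of the graph, whatever their endpoints. -/
structure IsLongestPath (p : G.Walk u v) : Prop where
  isPath : p.IsPath
  length_le : ∀ ⦃u' v' : V⦄ (q : G.Walk u' v'), q.IsPath → q.length ≤ p.length

theorem exists_isLongestPath_degree_maximal (G : SimpleGraph V) [Finite V] [Nonempty V]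
    [G.LocallyFinite] :
    ∃ (u v : V) (p : G.Walk u v), IsLongestPath p ∧
      ∀ ⦃u' v' : V⦄ (q : G.Walk u' v'), IsLongestPath q → G.degree u' ≤ G.degree u := by
  obtain ⟨a, b, p, hp, hmax⟩ := Walk.exists_isPath_forall_isPath_length_le_length G
  let starts : Set V := {u | ∃ (v : V) (q : G.Walk u v), IsLongestPath q}
  have hne : starts.Nonempty := ⟨a, b, p, hp, fun _ _ q hq ↦ hmax _ _ q hq⟩
  obtain ⟨u, ⟨v, q, hq⟩, hdeg⟩ := starts.exists_max_image (G.degree ·) starts.toFinite hne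
  exact ⟨u, v, q, hq, fun u' v' q' hq' ↦ hdeg u' ⟨v', q', hq'⟩⟩

theorem IsLongestPath.mem_support_of_adj (hp : IsLongestPath p) (hadj : G.Adj u x) :
    x ∈ p.support := by
  by_contra hx
  have := hp.length_le _ (hp.isPath.cons hx (h := hadj.symm))
  rw [Walk.length_cons] at this
  lia

theorem IsLongestPath.exists_getVert_succ_eq_of_adj (hp : IsLongestPath p) (hadj : G.Adj u x) :
    ∃ i < p.length, p.getVert (i + 1) = x := by
  obtain ⟨j, rfl, hj⟩ := Walk.mem_support_iff_exists_getVert.1 (hp.mem_support_of_adj hadj)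
  cases j with
  | zero => simp at hadj
  | succ i => exact ⟨i, hj, rfl⟩

theorem IsLongestPath.length_pos_of_adj {a b : V} (hp : IsLongestPath p) (hadj : G.Adj a b) :
    0 < p.length :=
  hp.length_le hadj.toWalk (Walk.IsPath.of_adj hadj)

theorem CircumferenceLE.succ_lt_of_adj_getVert_succ (h : CircumferenceLE G k) (hk : 2 ≤ k)
    (hp : p.IsPath) (hi : i < p.length) (hadj : G.Adj u (p.getVert (i + 1))) : i + 1 < k := by
  by_contra! hki
  exact h (i + 1 + 1) (by lia) (.of_adj_getVert hp (by lia) hi hadj)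

theorem getVert_mem_take_support (hi : i ≤ p.length) (hik : i < k) :
    p.getVert i ∈ p.support.take k := by
  rw [Walk.getVert_eq_support_getElem p hi]
  exact List.mem_take_iff_getElem.2 ⟨i, by rw [p.length_support]; lia, rfl⟩

theorem IsLongestPath.neighborFinset_subset_take_support [DecidableEq V]
    [Fintype (G.neighborSet u)] (h : CircumferenceLE G k) (hk : 2 ≤ k)
    (hp : IsLongestPath p) : G.neighborFinset u ⊆ (p.support.take k).toFinset := by
  intro x hx
  rw [mem_neighborFinset] at hx
  obtain ⟨i, hi, rfl⟩ := hp.exists_getVert_succ_eq_of_adj hx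
  exact List.mem_toFinset.2 <| getVert_mem_take_support hi <|
    h.succ_lt_of_adj_getVert_succ hk hp.isPath hi hx

end LongestPath

section PosaRotation

theorem reverse_take_append_drop_take_perm {l : List V} {j : ℕ} (hj : j ≤ l.length)
    (hjk : j ≤ k) : (((l.take j).reverse ++ l.drop j).take k).Perm (l.take k) := by
  obtain ⟨r, rfl⟩ := Nat.exists_eq_add_of_le hjk
  have hlen : (l.take j).reverse.length = j := by simpa using hj
  rw [List.take_append, List.take_of_length_le (by lia), hlen, Nat.add_sub_cancel_left,
    List.take_add]
  exact (List.reverse_perm _).append_right _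

/-- The Pósa rotation `p_i … p₀ p_{i+1} … p_ℓ` of the walk `p₀ … p_ℓ` along the edge
`p₀ p_{i+1}`. It is a rearrangement of `p` only for `i < ℓ`, since `getVert` is constant from `ℓ`
on. -/
def posaRotation (p : G.Walk u v) (i : ℕ) (hadj : G.Adj u (p.getVert (i + 1))) :
    G.Walk (p.getVert i) v :=
  (p.take i).reverse.append (.cons hadj (p.drop (i + 1)))

theorem support_posaRotation (hadj : G.Adj u (p.getVert (i + 1))) (hi : i < p.length) :
    (posaRotation p i hadj).support =
      (p.support.take (i + 1)).reverse ++ p.support.drop (i + 1) := by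
  simp [posaRotation, Walk.support_append, Walk.support_take, Nat.min_eq_left hi]

theorem take_support_posaRotation_perm (hadj : G.Adj u (p.getVert (i + 1))) (hi : i < p.length)
    (hik : i < k) : ((posaRotation p i hadj).support.take k).Perm (p.support.take k) := by
  rw [support_posaRotation hadj hi]
  exact reverse_take_append_drop_take_perm (by rw [p.length_support]; lia) hik

theorem support_posaRotation_perm (hadj : G.Adj u (p.getVert (i + 1))) (hi : i < p.length) :
    (posaRotation p i hadj).support.Perm p.support := by
  rw [support_posaRotation hadj hi]
  simpa using (List.reverse_perm (p.support.take (i + 1))).append_right (p.support.drop (i + 1))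

protected theorem IsLongestPath.posaRotation (hp : IsLongestPath p)
    (hadj : G.Adj u (p.getVert (i + 1))) (hi : i < p.length) :
    IsLongestPath (posaRotation p i hadj) := by
  have hperm := support_posaRotation_perm hadj hi
  have hlen : (posaRotation p i hadj).length = p.length := by
    simpa using hperm.length_eq
  refine ⟨.mk' (hperm.nodup_iff.2 hp.isPath.support_nodup), fun _ _ q hq ↦ ?_⟩
  exact hlen ▸ hp.length_le q hq

variable [DecidableEq V] [DecidableRel G.Adj]

/-- The first vertices of the Pósa rotations of `p`: the predecessors on `p` of the neighbours of
its first vertex. -/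
def rotationStarts (p : G.Walk u v) : Finset V :=
  {i ∈ range p.length | G.Adj u (p.getVert (i + 1))}.image p.getVert

theorem mem_rotationStarts :
    x ∈ rotationStarts p ↔ ∃ i < p.length, G.Adj u (p.getVert (i + 1)) ∧ p.getVert i = x := by
  simp [rotationStarts, and_assoc]

theorem end_notMem_rotationStarts (hp : p.IsPath) : v ∉ rotationStarts p := by
  rw [mem_rotationStarts]
  rintro ⟨i, hi, -, hiv⟩
  exact hi.ne ((hp.getVert_eq_end_iff hi.le).1 hiv)

theorem IsLongestPath.card_rotationStarts [Fintype (G.neighborSet u)] (hp : IsLongestPath p) :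
    #(rotationStarts p) = G.degree u := by
  have hinj := hp.isPath.getVert_injOn
  have himage : {i ∈ range p.length | G.Adj u (p.getVert (i + 1))}.image
      (fun i ↦ p.getVert (i + 1)) = G.neighborFinset u := by
    ext x
    simp only [mem_image, mem_filter, mem_range, mem_neighborFinset]
    refine ⟨?_, fun hx ↦ ?_⟩
    · rintro ⟨i, ⟨-, hadj⟩, rfl⟩
      exact hadj
    · obtain ⟨i, hi, rfl⟩ := hp.exists_getVert_succ_eq_of_adj hx
      exact ⟨i, ⟨hi, hx⟩, rfl⟩
  rw [← card_neighborFinset_eq_degree, ← himage, rotationStarts, card_image_of_injOn,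
    card_image_of_injOn]
  · intro i hi j hj hij
    simp only [coe_filter, mem_range, Set.mem_ofPred_eq] at hi hj
    exact Nat.succ_injective (hinj (Nat.succ_le_of_lt hi.1) (Nat.succ_le_of_lt hj.1) hij)
  · refine hinj.mono fun i hi ↦ ?_
    simp only [coe_filter, mem_range, Set.mem_ofPred_eq] at hi
    exact hi.1.le

theorem CircumferenceLE.rotationStarts_subset_take_support (h : CircumferenceLE G k) (hk : 2 ≤ k)
    (hp : p.IsPath) : rotationStarts p ⊆ (p.support.take k).toFinset := by
  intro x hx
  obtain ⟨i, hi, hadj, rfl⟩ := mem_rotationStarts.1 hx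
  have hik := h.succ_lt_of_adj_getVert_succ hk hp hi hadj
  exact List.mem_toFinset.2 (getVert_mem_take_support hi.le (by lia))

theorem IsLongestPath.neighborFinset_subset_of_mem_rotationStarts [Fintype (G.neighborSet x)]
    (h : CircumferenceLE G k) (hk : 2 ≤ k) (hp : IsLongestPath p)
    (hx : x ∈ rotationStarts p) : G.neighborFinset x ⊆ (p.support.take k).toFinset := by
  obtain ⟨i, hi, hadj, rfl⟩ := mem_rotationStarts.1 hx
  have hik := h.succ_lt_of_adj_getVert_succ hk hp.isPath hi hadj
  rw [← List.toFinset_eq_of_perm _ _ (take_support_posaRotation_perm hadj hi (by lia))]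
  exact (hp.posaRotation hadj hi).neighborFinset_subset_take_support h hk

end PosaRotation

section ErdosGallai

variable [Fintype V]

theorem CircumferenceLE.exists_nonempty_degree_add_card_neighborFinset_sdiff_le [DecidableEq V]
    [DecidableRel G.Adj] (h : CircumferenceLE G k) (hk : 2 ≤ k) (hG : G ≠ ⊥) :
    ∃ W : Finset V, W.Nonempty ∧ Wᶜ.Nonempty ∧
      ∀ w ∈ W, G.degree w + #(G.neighborFinset w \ W) ≤ k := by
  obtain ⟨a, b, hab⟩ := ne_bot_iff_exists_adj.1 hG
  have : Nonempty V := ⟨a⟩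
  obtain ⟨u, v, p, hp, hmax⟩ := exists_isLongestPath_degree_maximal G
  have hcard := hp.card_rotationStarts
  have hdeg_pos : 0 < G.degree u := by
    have hfirst := p.adj_getVert_succ (hp.length_pos_of_adj hab)
    rw [p.getVert_zero] at hfirst
    exact (G.degree_pos_iff_exists_adj u).2 ⟨_, hfirst⟩
  refine ⟨rotationStarts p, card_pos.1 (hcard ▸ hdeg_pos),
    ⟨v, mem_compl.2 (end_notMem_rotationStarts hp.isPath)⟩, fun w hw ↦ ?_⟩
  have hdeg : G.degree w ≤ #(rotationStarts p) := by
    obtain ⟨i, hi, hadj, rfl⟩ := mem_rotationStarts.1 hw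
    exact hcard ▸ hmax _ (hp.posaRotation hadj hi)
  have houtside : #(G.neighborFinset w \ rotationStarts p) + #(rotationStarts p) ≤ k := by
    calc #(G.neighborFinset w \ rotationStarts p) + #(rotationStarts p)
      _ ≤ #((p.support.take k).toFinset \ rotationStarts p) + #(rotationStarts p) := by
        gcongr
        exact hp.neighborFinset_subset_of_mem_rotationStarts h hk hw
      _ = #(p.support.take k).toFinset :=
        card_sdiff_add_card_eq_card (h.rotationStarts_subset_take_support hk hp.isPath)
      _ ≤ k := (List.toFinset_card_le _).trans (List.length_take_le _ _)
  lia

theorem CircumferenceLE.two_mul_card_edgeFinset_le [DecidableRel G.Adj] (h : CircumferenceLE G k)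
    (hk : 2 ≤ k) : 2 * #G.edgeFinset ≤ k * (Fintype.card V - 1) := by
  classical
  induction hn : Fintype.card V using Nat.strong_induction_on generalizing V with
  | _ n ih =>
  obtain hG | hG := eq_or_ne G ⊥
  · simp [edgeFinset_eq_empty.2 hG]
  obtain ⟨W, hW, hWc, hbound⟩ := h.exists_nonempty_degree_add_card_neighborFinset_sdiff_le hk hG
  have hcard : #W + #Wᶜ = n := hn ▸ W.card_add_card_compl
  have hcard_compl : Fintype.card ((W : Set V)ᶜ : Set V) = #Wᶜ :=
    Fintype.card_of_subtype _ (by simp)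
  have hrest : 2 * #(G.induce (W : Set V)ᶜ).edgeFinset ≤ k * (#Wᶜ - 1) :=
    ih _ (by have := hW.card_pos; lia) (h.induce _) hcard_compl
  calc 2 * #G.edgeFinset
    _ = 2 * #(G.induce (W : Set V)ᶜ).edgeFinset +
        ∑ w ∈ W, (G.degree w + #(G.neighborFinset w \ W)) :=
      two_mul_card_edgeFinset_eq_induce_compl_add W
    _ ≤ k * (#Wᶜ - 1) + #W * k := by
      gcongr
      exact sum_le_card_nsmul W _ k hbound
    _ = k * (#Wᶜ - 1 + #W) := by ring
    _ = k * (n - 1) := by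
      congr 1
      have := hWc.card_pos
      lia

end ErdosGallai

end Circumference

theorem stmt_3_general {α : Type*} [Fintype α] (G : SimpleGraph α) {k : ℕ} (hk : 2 ≤ k)
    (h : ∀ m, k < m → ¬ hasCycleLength G m) :
    2 * G.edgeSet.ncard ≤ k * (Fintype.card α - 1) := by
  classical
  rw [← coe_edgeFinset, Set.ncard_coe_finset]
  exact CircumferenceLE.two_mul_card_edgeFinset_le h hk

theorem stmt_3 {α : Type*} [Fintype α] (G : SimpleGraph α)
    (h : ∀ m, 5 ≤ m → ¬ hasCycleLength G m) :
    G.edgeSet.ncard ≤ 2 * Fintype.card α - 2 := by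
  have := stmt_3_general G (k := 4) (by norm_num) h
  lia
end

section
/- Let G be a finite simple graph on n vertices that is 2-good, contains no odd cycle of length at least 5 (no cycle C_{2j+1} for any j ≥ 2), and is saturated with respect to odd cycles of length at least 5, meaning that for every pair of nonadjacent vertices x, y of G the graph obtained from G by adding the edge xy contains an odd cycle of length at least 5. Then e(G) ≥ (5/4)n − 3, i.e., 4·e(G) ≥ 5n − 12. -/
open SimpleGraph

/-!
Saturation forces `G` to be connected: an edge joining two components would be a bridge and lie on
no cycle. Fix a breadth-first tree of `G` with root `r`. If the tree edge from `v ≠ r` to its parent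
lies in a triangle with third vertex `t`, then `vt` is not a tree edge: `t` is not the parent of
`v`, and `v` is not the parent of `t` because `t` is at most as far from `r` as `v`. A non-tree edge
arises in this way only from its two endpoints, so `2 (e - (n - 1)) ≥ (n - 1) - N`, where `N` is the
number of edges of `G` in no triangle. Goodness means that, outside the at most `k` deleted edges,
the edges in no triangle form a matching, so `N ≤ n / 2 + k`. The two estimates combine to
`4 e ≥ 5 n - 6 - 2 k`.
-/

section Saturation

variable {V : Type*} {G : SimpleGraph V}

lemma hasCycleLength_of_addEdge_of_not_reachable {x y : V} {m : ℕ} (hxy : ¬ G.Reachable x y)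
    (hm : hasCycleLength (addEdge G x y) m) : hasCycleLength G m := by
  obtain ⟨a, w, hw, rfl⟩ := hm
  have h_bridge : (addEdge G x y).IsBridge s(x, y) :=
    isBridge_sup_edge.mpr (IsBridge.of_not_reachable hxy)
  have h_edges : ∀ e ∈ w.edges, e ∈ G.edgeSet := fun e he ↦ by
    have he' := w.edges_subset_edgeSet he
    rw [addEdge, edgeSet_sup, edgeSet_fromEdgeSet] at he'
    refine he'.resolve_right fun h ↦ h_bridge.notMem_edges_of_isCycle hw ?_
    rwa [← Set.mem_singleton_iff.mp h.1]
  exact ⟨a, w.transfer G h_edges, hw.transfer h_edges, w.length_transfer h_edges⟩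

lemma preconnected_of_saturated {L : Set ℕ} (hfree : ∀ m ∈ L, ¬ hasCycleLength G m)
    (hsat : ∀ x y, x ≠ y → ¬ G.Adj x y → ∃ m ∈ L, hasCycleLength (addEdge G x y) m) :
    G.Preconnected := by
  intro x y
  by_contra hxy
  have hne : x ≠ y := fun h ↦ hxy (h ▸ Reachable.refl x)
  obtain ⟨m, hmL, hm⟩ := hsat x y hne fun h ↦ hxy h.reachable
  exact hfree m hmL (hasCycleLength_of_addEdge_of_not_reachable hxy hm)

end Saturation

section Counting

variable {V : Type*} [Finite V]

lemma two_mul_ncard_edgeSet_le_card_of_neighborSet_subsingleton {M : SimpleGraph V}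
    (hM : ∀ v, (M.neighborSet v).Subsingleton) : 2 * M.edgeSet.ncard ≤ Nat.card V := by
  classical
  have := Fintype.ofFinite V
  calc 2 * M.edgeSet.ncard = ∑ v, M.degree v := by
        rw [M.sum_degrees_eq_twice_card_edges, ← coe_edgeFinset, Set.ncard_coe_finset]
    _ ≤ ∑ _v : V, 1 := Finset.sum_le_sum fun v _ ↦ by
        rw [← card_neighborSet_eq_degree, Fintype.card_le_one_iff_subsingleton]
        exact (hM v).coe_sort
    _ = Nat.card V := by simp

lemma ncard_le_two_mul_ncard_of_forall_exists_mem {A : Set V} {X : Set (Sym2 V)}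
    (hAX : ∀ v ∈ A, ∃ e ∈ X, v ∈ e) : A.ncard ≤ 2 * X.ncard := by
  classical
  have := Fintype.ofFinite V
  have h_sub : A.toFinset ⊆ X.toFinset.biUnion Sym2.toFinset := fun v hv ↦ by
    simpa using hAX v (Set.mem_toFinset.mp hv)
  calc A.ncard = A.toFinset.card := Set.ncard_eq_toFinset_card' A
    _ ≤ (X.toFinset.biUnion Sym2.toFinset).card := Finset.card_le_card h_sub
    _ ≤ X.toFinset.card * 2 := Finset.card_biUnion_le_card_mul _ _ _ fun e _ ↦ by
        rw [Sym2.card_toFinset]; split <;> simp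
    _ = 2 * X.ncard := by rw [mul_comm, Set.ncard_eq_toFinset_card']

end Counting

section NonTriangleEdges

variable {V : Type*}

/-- The spanning subgraph of `H` formed by the edges that lie in no triangle of `H`. The
neighbourhood of `w` in it is the set that `goodVertex H w` requires to be a subsingleton. -/
def nonTriangleGraph (H : SimpleGraph V) : SimpleGraph V where
  Adj u v := H.Adj u v ∧ ¬ ∃ t, H.Adj u t ∧ H.Adj v t
  symm := ⟨fun _ _ ⟨huv, hno⟩ ↦ ⟨huv.symm, fun ⟨t, hvt, hut⟩ ↦ hno ⟨t, hut, hvt⟩⟩⟩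
  loopless := ⟨fun _ h ↦ h.1.ne rfl⟩

lemma edgeSet_nonTriangleGraph_subset_union (G : SimpleGraph V) (B : Set (Sym2 V)) :
    (nonTriangleGraph G).edgeSet ⊆ (nonTriangleGraph (G.deleteEdges B)).edgeSet ∪ B := by
  rintro ⟨u, v⟩ ⟨huv, hno⟩
  by_cases hB : s(u, v) ∈ B
  · exact Or.inr hB
  · exact Or.inl ⟨deleteEdges_adj.mpr ⟨huv, hB⟩,
      fun ⟨t, hut, hvt⟩ ↦ hno ⟨t, G.deleteEdges_le B hut, G.deleteEdges_le B hvt⟩⟩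

lemma two_mul_ncard_edgeSet_nonTriangleGraph_le [Finite V] {G : SimpleGraph V} {k : ℕ}
    (hG : kGood G k) : 2 * (nonTriangleGraph G).edgeSet.ncard ≤ Nat.card V + 2 * k := by
  obtain ⟨B, -, hBk, hgood⟩ := hG
  have h_cover : (nonTriangleGraph G).edgeSet.ncard ≤
      (nonTriangleGraph (G.deleteEdges B)).edgeSet.ncard + B.ncard :=
    (Set.ncard_le_ncard (edgeSet_nonTriangleGraph_subset_union G B)).trans (Set.ncard_union_le _ _)
  have h_matching : 2 * (nonTriangleGraph (G.deleteEdges B)).edgeSet.ncard ≤ Nat.card V :=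
    two_mul_ncard_edgeSet_le_card_of_neighborSet_subsingleton hgood
  omega

end NonTriangleEdges

section BreadthFirst

variable {V : Type*} {G : SimpleGraph V} {r : V} {p : V → V}

/-- `p` is the parent function of a breadth-first spanning tree of `G` with root `r`: it sends every
other vertex to a neighbour one step closer to `r`. The value `p r` is arbitrary. -/
def IsBFSParent (G : SimpleGraph V) (r : V) (p : V → V) : Prop :=
  ∀ v ≠ r, G.Adj v (p v) ∧ G.dist r v = G.dist r (p v) + 1

/-- The edges of the tree with root `r` and parent function `p`. -/
def parentEdges (r : V) (p : V → V) : Set (Sym2 V) :=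
  (fun v ↦ s(v, p v)) '' {r}ᶜ

lemma exists_isBFSParent (hG : G.Preconnected) (r : V) : ∃ p, IsBFSParent G r p := by
  have h_closer : ∀ v, ∃ u, v ≠ r → G.Adj v u ∧ G.dist r v = G.dist r u + 1 := by
    intro v
    obtain ⟨w, hw⟩ := (hG r v).exists_walk_length_eq_dist
    refine ⟨w.penultimate, fun hv ↦ ?_⟩
    have hadj : G.Adj w.penultimate v := w.adj_penultimate (w.not_nil_of_ne hv.symm)
    have h_len : w.dropLast.length + 1 = w.length :=
      Walk.length_dropLast_add_one (w.not_nil_of_ne hv.symm)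
    have h_up := dist_le w.dropLast
    have h_step := hadj.diff_dist_adj (u := r)
    exact ⟨hadj.symm, by omega⟩
  exact Classical.skolem.mp h_closer

namespace IsBFSParent

lemma injOn_parentEdge (hp : IsBFSParent G r p) : Set.InjOn (fun v ↦ s(v, p v)) {r}ᶜ := by
  intro u hu v hv huv
  rcases Sym2.eq_iff.mp huv with ⟨h, -⟩ | ⟨h_upv, h_puv⟩
  · exact h
  · have h_dist_u := (hp u hu).2
    have h_dist_v := (hp v hv).2
    rw [h_puv] at h_dist_u
    rw [← h_upv] at h_dist_v
    omega

lemma parentEdges_subset_edgeSet (hp : IsBFSParent G r p) : parentEdges r p ⊆ G.edgeSet := by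
  rintro _ ⟨v, hv, rfl⟩
  exact (hp v hv).1

lemma ncard_parentEdges_add_one [Finite V] (hp : IsBFSParent G r p) :
    (parentEdges r p).ncard + 1 = Nat.card V := by
  rw [parentEdges, hp.injOn_parentEdge.ncard_image, add_comm, ← Set.ncard_singleton r,
    Set.ncard_add_ncard_compl]

lemma mk_notMem_parentEdges (hp : IsBFSParent G r p) {v t : V} (hv : v ≠ r)
    (hpvt : G.Adj (p v) t) : s(v, t) ∉ parentEdges r p := by
  rintro ⟨u, hu, hut⟩
  rcases Sym2.eq_iff.mp hut with ⟨rfl, h⟩ | ⟨rfl, h⟩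
  · exact hpvt.ne h
  · have h_dist_v := (hp v hv).2
    have h_dist_u := (hp u hu).2
    have h_step := hpvt.diff_dist_adj (u := r)
    rw [h] at h_dist_u
    omega

lemma ncard_parentEdges_le [Finite V] (hp : IsBFSParent G r p) :
    (parentEdges r p).ncard ≤
      2 * (G.edgeSet \ parentEdges r p).ncard + (nonTriangleGraph G).edgeSet.ncard := by
  let N : Set V := {v | v ≠ r ∧ (nonTriangleGraph G).Adj v (p v)}
  have hN : N.ncard ≤ (nonTriangleGraph G).edgeSet.ncard :=
    Set.ncard_le_ncard_of_injOn (fun v ↦ s(v, p v)) (fun _ hv ↦ hv.2)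
      (hp.injOn_parentEdge.mono fun _ hv ↦ hv.1)
  have h_triangle : ({r}ᶜ \ N).ncard ≤ 2 * (G.edgeSet \ parentEdges r p).ncard := by
    refine ncard_le_two_mul_ncard_of_forall_exists_mem fun v ⟨hv, hvN⟩ ↦ ?_
    obtain ⟨t, hvt, hpvt⟩ : ∃ t, G.Adj v t ∧ G.Adj (p v) t :=
      not_not.mp fun hno ↦ hvN ⟨hv, (hp v hv).1, hno⟩
    exact ⟨s(v, t), ⟨hvt, hp.mk_notMem_parentEdges hv hpvt⟩, Sym2.mem_mk_left v t⟩
  calc (parentEdges r p).ncard = ({r}ᶜ : Set V).ncard := hp.injOn_parentEdge.ncard_image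
    _ ≤ ({r}ᶜ \ N).ncard + N.ncard := Set.ncard_le_ncard_sdiff_add_ncard _ _
    _ ≤ _ := add_le_add h_triangle hN

end IsBFSParent

theorem three_mul_card_le_of_preconnected [Finite V] (hG : G.Preconnected) :
    3 * Nat.card V ≤ 2 * G.edgeSet.ncard + (nonTriangleGraph G).edgeSet.ncard + 3 := by
  obtain hV | ⟨⟨r⟩⟩ := isEmpty_or_nonempty V
  · simp
  obtain ⟨p, hp⟩ := exists_isBFSParent hG r
  have h_tree := hp.ncard_parentEdges_add_one
  have h_nontree := Set.ncard_sdiff_add_ncard_of_subset hp.parentEdges_subset_edgeSet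
  have h_incident := hp.ncard_parentEdges_le
  omega

end BreadthFirst

theorem stmt_6_general {V : Type*} [Finite V] {G : SimpleGraph V} {k : ℕ} (hgood : kGood G k)
    (hG : G.Preconnected) : 5 * Nat.card V ≤ 4 * G.edgeSet.ncard + 2 * k + 6 := by
  have h_edges := three_mul_card_le_of_preconnected hG
  have h_nonTriangle := two_mul_ncard_edgeSet_nonTriangleGraph_le hgood
  omega

theorem stmt_6 {α : Type*} [Fintype α] (G : SimpleGraph α)
    (h2good : kGood G 2)
    (hnoodd : ∀ m, 5 ≤ m → Odd m → ¬ hasCycleLength G m)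
    (hsat : ∀ x y : α, x ≠ y → ¬ G.Adj x y →
      ∃ m, 5 ≤ m ∧ Odd m ∧ hasCycleLength (addEdge G x y) m) :
    5 * Fintype.card α ≤ 4 * G.edgeSet.ncard + 12 := by
  have hG : G.Preconnected := preconnected_of_saturated (L := {m | 5 ≤ m ∧ Odd m})
    (fun m hm ↦ hnoodd m hm.1 hm.2) fun x y hne hxy ↦
      let ⟨m, h5, hodd, hm⟩ := hsat x y hne hxy; ⟨m, ⟨h5, hodd⟩, hm⟩
  have h_bound := Nat.card_eq_fintype_card (α := α) ▸ stmt_6_general h2good hG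
  omega
end

section
/- Let G be a finite simple graph that is 2-good and contains no odd cycle of length at least 5 (no cycle C_{2j+1} for any j ≥ 2). Suppose v₁x and v₂x are edges of G with v₁ ≠ v₂ such that neither v₁x nor v₂x is contained in a triangle of G, and suppose v₁v₂ is not an edge of G. Then the graph obtained from G by adding the edge v₁v₂ contains no odd cycle of length at least 5. -/
open SimpleGraph

/-!
Call an edge bare if it lies in no triangle. If `G − B` has only good vertices, then the bare edges
of `G` outside `B` form a matching, so a trail of `n` bare edges meets `B` in at least `⌊n / 2⌋`
edges.

A triangle on an edge of an even cycle of length at least `6` would close up an odd cycle of length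
at least `5`. Without such odd cycles, every cycle of length at least `5` is therefore made of at
least `6` bare edges and needs three edges of `B`; if `|B| ≤ 2`, all cycles have length at most `4`.

Let now `v₁x` and `v₂x` be bare and let `p` be a path from `v₁` to `v₂`. If `p` avoids `x`, it
closes up to a cycle through `x`, so it has length at most `2`. Otherwise `x` cuts `p` into two
pieces, each of length at most `3` because it closes up to a cycle. A piece of length `2` is a
triangle on `vᵢx`; a piece of length `3` spans a `4`-cycle of bare edges to which the other edge at
`x` is attached, which again needs three edges of `B`. So both pieces are single edges, `p` has
length at most `2`, and the new edge `v₁v₂` lies on no cycle longer than `3`.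
-/

section Cycles

variable {α : Type*} {G : SimpleGraph α} {a b : α}

theorem hasCycleLength_of_isPath {p : G.Walk a b} (hp : p.IsPath) (hl : 2 ≤ p.length)
    (hab : G.Adj a b) : hasCycleLength G (p.length + 1) := by
  refine ⟨b, .cons hab.symm p, ?_, p.length_cons _⟩
  exact Walk.isCycle_iff_isPath_tail_and_le_length.2 ⟨by simpa using hp, by simpa using hl⟩

theorem eq_snd_or_eq_penultimate_of_isCycle {c : G.Walk a a} (hc : c.IsCycle)
    (hab : s(a, b) ∈ c.edges) : b = c.snd ∨ b = c.penultimate := by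
  cases c with
  | nil => simp at hab
  | cons h p =>
    rw [Walk.edges_cons, List.mem_cons, Sym2.congr_right] at hab
    have hp := ((Walk.cons_isCycle_iff p h).1 hc).1
    have hnil := Walk.not_nil_of_isCycle_cons hc
    exact hab.imp (by simp [·]) fun hmem => by
      rw [Walk.penultimate_cons_of_not_nil h p hnil, hp.eq_penultimate_of_mem_edges hmem]

theorem exists_isPath_of_mem_edges_of_isCycle {d : α} {c : G.Walk d d} (hc : c.IsCycle)
    (hab : s(a, b) ∈ c.edges) : ∃ p : G.Walk a b, p.IsPath ∧ p.length + 1 = c.length := by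
  classical
  have ha := Walk.fst_mem_support_of_mem_edges c hab
  have exists_isPath_snd (c : G.Walk a a) (hc : c.IsCycle) :
      ∃ p : G.Walk a c.snd, p.IsPath ∧ p.length + 1 = c.length :=
    ⟨c.tail.reverse, hc.isPath_tail.reverse, by
      rw [Walk.length_reverse, Walk.length_tail_add_one hc.not_nil]⟩
  rw [← (c.rotate_edges a ha).mem_iff] at hab
  rw [← Walk.length_rotate c a ha]
  obtain rfl | rfl := eq_snd_or_eq_penultimate_of_isCycle (hc.rotate ha) hab
  · exact exists_isPath_snd _ (hc.rotate ha)
  · rw [← Walk.snd_reverse, ← Walk.length_reverse]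
    exact exists_isPath_snd _ (hc.rotate ha).reverse

end Cycles

/-- The edges of `F` outside `B` form a matching, encoded as: every vertex has at most one neighbor
in `F - B`. For bare edges this is what goodness of all vertices of `G - B` yields. -/
def IsMatchingOutside {α : Type*} (F : SimpleGraph α) (B : Set (Sym2 α)) : Prop :=
  ∀ w, ((F.deleteEdges B).neighborSet w).Subsingleton

namespace IsMatchingOutside

variable {α : Type*} {F : SimpleGraph α} {B : Set (Sym2 α)}

theorem mem_or_mem (hB : IsMatchingOutside F B) {w y z : α} (hy : F.Adj w y)
    (hz : F.Adj w z) (hyz : y ≠ z) : s(w, y) ∈ B ∨ s(w, z) ∈ B := by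
  by_contra! h
  exact hyz (hB w (deleteEdges_adj.2 ⟨hy, h.1⟩) (deleteEdges_adj.2 ⟨hz, h.2⟩))

theorem length_div_two_le_encard_edgeSet_inter (hB : IsMatchingOutside F B) {u v : α}
    (p : F.Walk u v) (hp : p.IsTrail) : ((p.length / 2 : ℕ) : ℕ∞) ≤ (p.edgeSet ∩ B).encard := by
  match p, hp with
  | .nil, _ => simp
  | .cons _ .nil, _ => simp
  | .cons (v := w) h (.cons (v := z) h' q), hp =>
    simp only [Walk.isTrail_cons, Walk.edges_cons, List.mem_cons, not_or] at hp
    obtain ⟨⟨hq, hwz⟩, huw, hq'⟩ := hp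
    have huz : u ≠ z := by rintro rfl; exact huw Sym2.eq_swap
    obtain ⟨e, heB, heq, hep⟩ :
        ∃ e ∈ B, e ∉ q.edgeSet ∧ e ∈ (Walk.cons h (.cons h' q)).edgeSet := by
      rcases hB.mem_or_mem h.symm h' huz with he | he
      · exact ⟨_, he, by simpa [Sym2.eq_swap] using hq', by simp [Sym2.eq_swap]⟩
      · exact ⟨_, he, by simpa using hwz, by simp⟩
    have ih := hB.length_div_two_le_encard_edgeSet_inter q hq
    calc (((q.length + 2) / 2 : ℕ) : ℕ∞) = (q.length / 2 : ℕ) + 1 := by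
          rw [Nat.add_div_right _ two_pos, Nat.cast_succ]
      _ ≤ (q.edgeSet ∩ B).encard + 1 := by gcongr
      _ = (insert e (q.edgeSet ∩ B)).encard :=
          (Set.encard_insert_of_notMem fun he => heq he.1).symm
      _ ≤ _ := by
          refine Set.encard_le_encard (Set.insert_subset ⟨hep, heB⟩ ?_)
          exact Set.inter_subset_inter_left B fun f hf => by simp_all

theorem three_le_encard_of_fourCycle_of_pendant (hB : IsMatchingOutside F B) {a b v x y : α}
    (hva : F.Adj v a) (hab : F.Adj a b) (hbx : F.Adj b x) (hvx : F.Adj v x) (hyx : F.Adj y x)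
    (hvb : v ≠ b) (hax : a ≠ x) (hyv : y ≠ v) (hyb : y ≠ b) : 3 ≤ B.encard := by
  obtain ⟨z, w, hzw, hz, hw⟩ : ∃ z w, z ≠ w ∧ s(x, z) ∈ B ∧ s(x, w) ∈ B := by
    have hvb' := hB.mem_or_mem hvx.symm hbx.symm hvb
    have hyv' := hB.mem_or_mem hyx.symm hvx.symm hyv
    have hyb' := hB.mem_or_mem hyx.symm hbx.symm hyb
    grind
  obtain ⟨u, hux, hu⟩ : ∃ u, u ≠ x ∧ s(a, u) ∈ B :=
    (hB.mem_or_mem hva.symm hab hvb).elim (⟨v, hvx.ne, ·⟩) (⟨b, hbx.ne, ·⟩)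
  have hcard : ({s(x, z), s(x, w), s(a, u)} : Set (Sym2 α)).encard = 3 :=
    Set.encard_eq_three.2 ⟨_, _, _, by grind, by grind, by grind, rfl⟩
  exact hcard ▸ Set.encard_le_encard (by grind)

end IsMatchingOutside

/-- The graph formed by the bare edges of `G`, those contained in no triangle of `G`. -/
def bareGraph {α : Type*} (G : SimpleGraph α) : SimpleGraph α where
  Adj a b := G.Adj a b ∧ ¬ ∃ t, G.Adj a t ∧ G.Adj b t
  symm := ⟨fun _ _ h => ⟨h.1.symm, fun ⟨t, hb, ha⟩ => h.2 ⟨t, ha, hb⟩⟩⟩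
  loopless := ⟨fun _ h => h.1.ne rfl⟩

theorem isMatchingOutside_bareGraph_of_goodVertex {α : Type*} {G : SimpleGraph α}
    {B : Set (Sym2 α)} (hgood : ∀ w, goodVertex (G.deleteEdges B) w) :
    IsMatchingOutside (bareGraph G) B := fun w =>
  (hgood w).anti fun _ hz =>
    have ⟨⟨hadj, hbare⟩, hzB⟩ := deleteEdges_adj.1 hz
    ⟨deleteEdges_adj.2 ⟨hadj, hzB⟩, fun ⟨t, hwt, hzt⟩ =>
      hbare ⟨t, (deleteEdges_adj.1 hwt).1, (deleteEdges_adj.1 hzt).1⟩⟩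

/-- `G` contains no odd cycle of length at least `5`, so that its only odd cycles are triangles. -/
def NoLongOddCycle {α : Type*} (G : SimpleGraph α) : Prop :=
  ∀ m, 5 ≤ m → Odd m → ¬ hasCycleLength G m

namespace NoLongOddCycle

variable {α : Type*} {G : SimpleGraph α} {a b : α}

theorem not_adj_of_isPath (hG : NoLongOddCycle G) {p : G.Walk a b} (hp : p.IsPath)
    (he : Even p.length) (hl : 4 ≤ p.length) : ¬ G.Adj a b := fun hab =>
  hG _ (by lia) he.add_one (hasCycleLength_of_isPath hp (by lia) hab)

theorem not_adj_of_even_of_odd (hG : NoLongOddCycle G) {t : α} {q : G.Walk a t} {r : G.Walk t b}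
    (hq : q.IsPath) (hr : r.IsPath) (har : a ∉ r.support) (hqe : Even q.length) (hro : Odd r.length)
    (hl : 5 ≤ q.length + r.length) (hab : G.Adj a b) : ¬ G.Adj a t := fun hat => by
  by_cases hq4 : 4 ≤ q.length
  · exact hG.not_adj_of_isPath hq hqe hq4 hat
  · refine hG.not_adj_of_isPath (hr.cons (h := hat) har) (by simpa using hro.add_one) ?_ hab
    rw [Walk.length_cons]
    grind

theorem bareGraph_adj_of_isPath (hG : NoLongOddCycle G) {p : G.Walk a b} (hp : p.IsPath)
    (ho : Odd p.length) (hl : 5 ≤ p.length) (hab : G.Adj a b) : (bareGraph G).Adj a b := by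
  refine ⟨hab, fun ⟨t, hat, hbt⟩ => ?_⟩
  by_cases ht : t ∈ p.support
  · obtain ⟨q, r, hq, hr, rfl⟩ := hp.mem_support_iff_exists_append.1 ht
    rw [Walk.length_append] at ho hl
    have har : a ∉ r.support := fun h =>
      hp.ne_of_mem_support_of_append hat.ne q.start_mem_support h rfl
    have hbq : b ∉ q.support := fun h =>
      hp.ne_of_mem_support_of_append hbt.ne h r.end_mem_support rfl
    rcases Nat.even_or_odd q.length with hqe | hqo
    · exact hG.not_adj_of_even_of_odd hq hr har hqe ((Nat.odd_add'.1 ho).2 hqe) hl hab hat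
    · exact hG.not_adj_of_even_of_odd hr.reverse hq.reverse (by simpa using hbq)
        (by simpa using (Nat.odd_add.1 ho).1 hqo) (by simpa using hqo)
        (by simpa [add_comm] using hl) hab.symm hbt
  · exact hG.not_adj_of_isPath (hp.cons (h := hat.symm) ht) (by simpa using ho.add_one)
      (by rw [Walk.length_cons]; lia) hbt.symm

theorem bareGraph_adj_of_fourCycle (hG : NoLongOddCycle G) {c d : α} (hab : G.Adj a b)
    (hbc : G.Adj b c) (hcd : G.Adj c d) (hda : G.Adj d a) (hac : a ≠ c) (hbd : b ≠ d)
    (hnac : ¬ G.Adj a c) (hnbd : ¬ G.Adj b d) : (bareGraph G).Adj a b := by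
  refine ⟨hab, fun ⟨t, hat, hbt⟩ => ?_⟩
  have htc : t ≠ c := by rintro rfl; exact hnac hat
  have htd : t ≠ d := by rintro rfl; exact hnbd hbt
  let p : G.Walk t a := .cons hbt.symm (.cons hbc (.cons hcd (.cons hda .nil)))
  have hp : p.IsPath := by
    simp [p, Walk.cons_isPath_iff, hat.ne', hbt.ne', hbc.ne, hab.ne', hcd.ne, hda.ne, hac.symm, *]
  exact hG.not_adj_of_isPath hp ⟨2, rfl⟩ le_rfl hat.symm

section EdgeSet

variable {B : Set (Sym2 α)}

theorem div_two_le_encard_of_hasCycleLength (hG : NoLongOddCycle G)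
    (hB : IsMatchingOutside (bareGraph G) B) {m : ℕ} (h5 : 5 ≤ m) (hm : hasCycleLength G m) :
    ((m / 2 : ℕ) : ℕ∞) ≤ B.encard := by
  have heven : Even m := Nat.not_odd_iff_even.1 fun ho => hG m h5 ho hm
  obtain ⟨a, c, hc, rfl⟩ := hm
  have hbare : ∀ e ∈ c.edges, e ∈ (bareGraph G).edgeSet := by
    rintro ⟨u, v⟩ he
    obtain ⟨p, hp, hpc⟩ := exists_isPath_of_mem_edges_of_isCycle hc he
    exact hG.bareGraph_adj_of_isPath hp (by grind) (by grind) (c.adj_of_mem_edges he)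
  have hle := hB.length_div_two_le_encard_edgeSet_inter _ (hc.transfer hbare).isTrail
  rw [Walk.length_transfer] at hle
  exact hle.trans (Set.encard_le_encard Set.inter_subset_right)

theorem le_four_of_hasCycleLength (hG : NoLongOddCycle G) (hcard : B.encard ≤ 2)
    (hB : IsMatchingOutside (bareGraph G) B) {m : ℕ} (hm : hasCycleLength G m) : m ≤ 4 := by
  by_contra! h5
  have hle : m / 2 ≤ 2 := by
    exact_mod_cast (hG.div_two_le_encard_of_hasCycleLength hB h5 hm).trans hcard
  have hodd : Odd m := ⟨2, by lia⟩
  exact hG m h5 hodd hm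

theorem length_le_three_of_isPath (hG : NoLongOddCycle G) (hcard : B.encard ≤ 2)
    (hB : IsMatchingOutside (bareGraph G) B) {p : G.Walk a b} (hp : p.IsPath) (hab : G.Adj a b) :
    p.length ≤ 3 := by
  by_contra! hl
  have := hG.le_four_of_hasCycleLength hcard hB (hasCycleLength_of_isPath hp (by lia) hab)
  lia

theorem length_le_one_of_isPath_of_pendant (hG : NoLongOddCycle G) (hcard : B.encard ≤ 2)
    (hB : IsMatchingOutside (bareGraph G) B) {v x y : α} {p : G.Walk v x}
    (hp : p.IsPath) (hy : y ∉ p.support) (hvx : (bareGraph G).Adj v x)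
    (hyx : (bareGraph G).Adj y x) : p.length ≤ 1 := by
  have hl := hG.length_le_three_of_isPath hcard hB hp hvx.1
  match p, hp, hy, hl with
  | .nil, _, _, _ => simp
  | .cons _ .nil, _, _, _ => simp
  | .cons hva (.cons hax .nil), _, _, _ => exact (hvx.2 ⟨_, hva, hax.symm⟩).elim
  | .cons (v := a) hva (.cons (v := b) hab (.cons hbx .nil)), hp, hy, _ =>
    simp only [Walk.cons_isPath_iff, Walk.support_cons, Walk.support_nil, List.mem_cons, not_or,
      List.not_mem_nil, not_false_eq_true, and_true] at hp hy
    obtain ⟨⟨_, -, hax⟩, -, hvb, -⟩ := hp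
    have hnax : ¬ G.Adj a x := fun h => hvx.2 ⟨a, hva, h.symm⟩
    have hnvb : ¬ G.Adj v b := fun h => hvx.2 ⟨b, h, hbx.symm⟩
    have hva' := hG.bareGraph_adj_of_fourCycle hva hab hbx hvx.1.symm hvb hax hnvb hnax
    have hab' := hG.bareGraph_adj_of_fourCycle hab hbx hvx.1.symm hva hax (Ne.symm hvb) hnax
      (hnvb ·.symm)
    have hbx' := hG.bareGraph_adj_of_fourCycle hbx hvx.1.symm hva hab (Ne.symm hvb) (Ne.symm hax)
      (hnvb ·.symm) (hnax ·.symm)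
    have hthree := hB.three_le_encard_of_fourCycle_of_pendant hva' hab' hbx' hvx hyx hvb hax hy.1
      hy.2.2.1
    exact absurd (hthree.trans hcard) (by decide)

theorem length_le_two_of_isPath (hG : NoLongOddCycle G) (hcard : B.encard ≤ 2)
    (hB : IsMatchingOutside (bareGraph G) B) {v₁ v₂ x : α} (h₁ : (bareGraph G).Adj v₁ x)
    (h₂ : (bareGraph G).Adj v₂ x) {p : G.Walk v₁ v₂} (hp : p.IsPath) : p.length ≤ 2 := by
  by_cases hx : x ∈ p.support
  · obtain ⟨q, r, hq, hr, rfl⟩ := hp.mem_support_iff_exists_append.1 hx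
    have hv₂q : v₂ ∉ q.support := fun h =>
      hp.ne_of_mem_support_of_append h₂.ne h r.end_mem_support rfl
    have hv₁r : v₁ ∉ r.reverse.support := fun h =>
      hp.ne_of_mem_support_of_append h₁.ne q.start_mem_support (by simpa using h) rfl
    have hq1 := hG.length_le_one_of_isPath_of_pendant hcard hB hq hv₂q h₁ h₂
    have hr1 := hG.length_le_one_of_isPath_of_pendant hcard hB hr.reverse hv₁r h₂ h₁
    rw [Walk.length_reverse] at hr1
    rw [Walk.length_append]
    lia
  · have := hG.length_le_three_of_isPath hcard hB (hp.cons (h := h₁.1.symm) hx) h₂.1.symm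
    rw [Walk.length_cons] at this
    lia

end EdgeSet

end NoLongOddCycle

theorem mem_edgeSet_of_notMem_edges_addEdge {α : Type*} {G : SimpleGraph α} {v₁ v₂ a b : α}
    {w : (addEdge G v₁ v₂).Walk a b} (hw : s(v₁, v₂) ∉ w.edges) :
    ∀ e ∈ w.edges, e ∈ G.edgeSet := by
  intro e he
  have hadd := w.edges_subset_edgeSet he
  have hne : e ≠ s(v₁, v₂) := fun h => hw (h ▸ he)
  simp only [addEdge, edgeSet_sup, edgeSet_fromEdgeSet, Set.mem_union, Set.mem_sdiff,
    Set.mem_singleton_iff] at hadd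
  tauto

/-- The bound on `B` is by `encard`, since `ncard` would count an infinite `B` as empty. -/
theorem stmt_7_general {α : Type*} (G : SimpleGraph α) {B : Set (Sym2 α)} (hcard : B.encard ≤ 2)
    (hgood : ∀ w, goodVertex (G.deleteEdges B) w)
    (hnoodd : ∀ m, 5 ≤ m → Odd m → ¬ hasCycleLength G m)
    (v₁ v₂ x : α) (h1 : G.Adj v₁ x) (h2 : G.Adj v₂ x)
    (ht1 : ¬ ∃ t, G.Adj v₁ t ∧ G.Adj x t)
    (ht2 : ¬ ∃ t, G.Adj v₂ t ∧ G.Adj x t) :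
    ∀ m, hasCycleLength (addEdge G v₁ v₂) m → m ≤ 4 := by
  have hG : NoLongOddCycle G := hnoodd
  have hB := isMatchingOutside_bareGraph_of_goodVertex hgood
  rintro m ⟨a, c, hc, rfl⟩
  by_cases hv : s(v₁, v₂) ∈ c.edges
  · obtain ⟨p, hp, hpc⟩ := exists_isPath_of_mem_edges_of_isCycle hc hv
    by_contra! hl
    have hpG := mem_edgeSet_of_notMem_edges_addEdge fun hmem => by
      have := hp.length_eq_one_of_mem_edges hmem
      lia
    have hp2 := hG.length_le_two_of_isPath hcard hB ⟨h1, ht1⟩ ⟨h2, ht2⟩ (hp.transfer hpG)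
    rw [Walk.length_transfer] at hp2
    lia
  · have hcG := mem_edgeSet_of_notMem_edges_addEdge hv
    exact hG.le_four_of_hasCycleLength hcard hB
      ⟨a, c.transfer G hcG, hc.transfer hcG, c.length_transfer hcG⟩

theorem stmt_7 {α : Type*} [Fintype α] (G : SimpleGraph α)
    (h2good : kGood G 2)
    (hnoodd : ∀ m, 5 ≤ m → Odd m → ¬ hasCycleLength G m)
    (v₁ v₂ x : α) (hne : v₁ ≠ v₂)
    (h1 : G.Adj v₁ x) (h2 : G.Adj v₂ x)
    (ht1 : ¬ ∃ t, G.Adj v₁ t ∧ G.Adj x t)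
    (ht2 : ¬ ∃ t, G.Adj v₂ t ∧ G.Adj x t)
    (hnadj : ¬ G.Adj v₁ v₂) :
    ∀ m, 5 ≤ m → Odd m → ¬ hasCycleLength (addEdge G v₁ v₂) m := by
  obtain ⟨B, -, hcard, hgood⟩ := h2good
  have hcard' : B.encard ≤ 2 := by rw [← (Set.toFinite B).cast_ncard_eq]; exact_mod_cast hcard
  exact fun m hm _ hc => absurd
    (stmt_7_general G hcard' hgood hnoodd v₁ v₂ x h1 h2 ht1 ht2 m hc) (by lia)
end

section
/- Let k ≥ 2 and let G be a finite simple graph containing no odd cycle of length less than 2k + 1 (i.e., no cycle C_{2j+1} for any 1 ≤ j ≤ k − 1). If C is a cycle of length 2k + 1 contained in G, then every vertex of G has at most two neighbors among the vertices of C. -/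
open SimpleGraph

/-!
An odd closed walk that is not a cycle splits into two shorter closed walks, one of them odd; hence
the shortest odd closed walks are the shortest odd cycles. Three vertices of such a walk, of length
`g`, cut it into three arcs. If all three are adjacent to `z`, closing an arc through `z` adds two
edges, so every odd arc has length at least `g - 2`. Since `g` is odd, either a single arc is odd
and the other two have length at least `2`, so `g ≥ (g - 2) + 2 + 2`, which is absurd; or all three
arcs are odd, and `g ≥ 3 * (g - 2)`, that is, `g ≤ 3`.
-/

section

variable {α : Type*} {G : SimpleGraph α}

theorem exists_odd_hasCycleLength_le_length {u : α} (w : G.Walk u u) (hodd : Odd w.length) :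
    ∃ m ≤ w.length, Odd m ∧ hasCycleLength G m := by
  induction hn : w.length using Nat.strong_induction_on generalizing u with
  | _ n ih =>
    subst hn
    have of_shorter {v : α} (c : G.Walk v v) (hc : Odd c.length) (hlt : c.length < w.length) :
        ∃ m ≤ w.length, Odd m ∧ hasCycleLength G m :=
      let ⟨m, hm, h⟩ := ih c.length hlt c hc rfl
      ⟨m, hm.trans hlt.le, h⟩
    cases w with
    | nil => simp at hodd
    | cons hadj p =>
      have hp_pos : p.length ≠ 0 := fun h ↦ hadj.ne (Walk.eq_of_length_eq_zero h).symm
      rw [Walk.length_cons] at hodd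
      by_cases hp : p.IsPath
      · have hcycle : (Walk.cons hadj p).IsCycle := by
          rw [Walk.isCycle_iff_isPath_tail_and_le_length]
          refine ⟨by simpa using hp, ?_⟩
          rw [Walk.length_cons]
          grind
        exact ⟨_, le_rfl, hodd, u, _, hcycle, rfl⟩
      · rw [Walk.isPath_iff_isSubwalk_imp_nil] at hp
        push Not at hp
        obtain ⟨v, c, ⟨q, r, rfl⟩, hc⟩ := hp
        rw [Walk.not_nil_iff_lt_length] at hc
        simp only [Walk.length_append, Walk.length_cons] at hodd of_shorter ⊢
        obtain hc_even | hc_odd := Nat.even_or_odd c.length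
        · have hodd_cut : Odd (Walk.cons hadj (q.append r)).length := by
            rw [Walk.length_cons, Walk.length_append]
            grind
          refine of_shorter _ hodd_cut ?_
          rw [Walk.length_cons, Walk.length_append]
          omega
        · exact of_shorter c hc_odd (by omega)

theorem exists_walks_length_add_eq_of_mem_support {a x y z : α} {w : G.Walk a a}
    (hx : x ∈ w.support) (hy : y ∈ w.support) (hz : z ∈ w.support) :
    ∃ (p : G.Walk x y) (q : G.Walk y z) (r : G.Walk z x),
      p.length + q.length + r.length = w.length := by
  classical
  rw [← w.mem_support_rotate_iff x hx] at hy hz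
  rw [← w.length_rotate x hx]
  obtain ⟨p, s, hps⟩ := Walk.mem_support_iff_exists_append.mp hy
  rw [hps, Walk.mem_support_append_iff] at hz
  rw [hps]
  rcases hz with hz | hz
  · obtain ⟨p₁, p₂, rfl⟩ := Walk.mem_support_iff_exists_append.mp hz
    refine ⟨s.reverse, p₂.reverse, p₁.reverse, ?_⟩
    simp only [Walk.length_reverse, Walk.length_append]
    omega
  · obtain ⟨q, r, rfl⟩ := Walk.mem_support_iff_exists_append.mp hz
    exact ⟨p, q, r, by simp only [Walk.length_append, add_assoc]⟩

theorem ncard_neighborSet_inter_support_le_two {a : α} {w : G.Walk a a} (hodd : Odd w.length)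
    (hmin : ∀ ⦃v : α⦄ (c : G.Walk v v), Odd c.length → w.length ≤ c.length)
    (hlen : 3 < w.length) (z : α) :
    (G.neighborSet z ∩ {x | x ∈ w.support}).ncard ≤ 2 := by
  have odd_arc {x y : α} (hx : G.Adj z x) (hy : G.Adj z y) (p : G.Walk x y)
      (hp : Odd p.length) : w.length ≤ p.length + 2 := by
    simpa using hmin (.cons hx (p.concat hy.symm)) (by simpa [Nat.odd_add] using hp)
  have arc_pos {x y : α} (hxy : x ≠ y) (p : G.Walk x y) : p.length ≠ 0 :=
    fun h ↦ hxy (Walk.eq_of_length_eq_zero h)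
  by_contra! hlt
  rw [Set.two_lt_ncard (w.support.finite_toSet.inter_of_right _)] at hlt
  obtain ⟨x, ⟨hzx, hx⟩, y, ⟨hzy, hy⟩, u, ⟨hzu, hu⟩, hxy, hxu, hyu⟩ := hlt
  obtain ⟨p, q, r, hsum⟩ := exists_walks_length_add_eq_of_mem_support hx hy hu
  have hp := odd_arc hzx hzy p
  have hq := odd_arc hzy hzu q
  have hr := odd_arc hzu hzx r
  have hp_pos := arc_pos hxy p
  have hq_pos := arc_pos hyu q
  have hr_pos := arc_pos hxu.symm r
  simp only [Nat.odd_iff] at hodd hp hq hr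
  omega

end

theorem stmt_9_general {α : Type*} (G : SimpleGraph α) (k : ℕ) (hk : 2 ≤ k)
    (hno : ∀ j, 1 ≤ j → j ≤ k - 1 → ¬ hasCycleLength G (2 * j + 1))
    (a : α) (w : G.Walk a a) (hlen : w.length = 2 * k + 1) :
    ∀ z : α, (G.neighborSet z ∩ {x | x ∈ w.support}).ncard ≤ 2 := by
  refine ncard_neighborSet_inter_support_le_two (hlen ▸ odd_two_mul_add_one k) ?_ (by omega)
  intro v c hc
  obtain ⟨m, hmc, ⟨j, rfl⟩, hcycle⟩ := exists_odd_hasCycleLength_le_length c hc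
  have hj : 1 ≤ j := by
    obtain ⟨_, c', hc', hlen'⟩ := hcycle
    have := hc'.three_le_length
    omega
  have hkj : ¬ j ≤ k - 1 := fun h ↦ hno j hj h hcycle
  omega

theorem stmt_9 {α : Type*} [Fintype α] (G : SimpleGraph α) (k : ℕ) (hk : 2 ≤ k)
    (hno : ∀ j, 1 ≤ j → j ≤ k - 1 → ¬ hasCycleLength G (2 * j + 1))
    (a : α) (w : G.Walk a a) (hw : w.IsCycle) (hlen : w.length = 2 * k + 1) :
    ∀ z : α, (G.neighborSet z ∩ {x | x ∈ w.support}).ncard ≤ 2 :=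
  stmt_9_general G k hk hno a w hlen
end

section
/- Let k ≥ 1 and let G be a finite simple graph on n vertices containing no cycle of length 2k + 1. Then for every vertex v of G, the number of edges of G having both endpoints in N(v) is at most (2k − 1)n/2, i.e., twice this number of edges is at most (2k − 1)n. -/
open SimpleGraph

/-!
A path on `2 * k` vertices inside `N(v)` closes up through `v` to a cycle of length `2 * k + 1`, so
the graph induced on `N(v)` has no path of length `2 * k - 1`, and the Erdős–Gallai bound applies to
it: a graph on `n` vertices without a path of length `ℓ` has at most `(ℓ - 1) * n / 2` edges.

For that bound, it suffices to find a nonempty set `s` of vertices that meets at most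
`(ℓ - 1) * |s| / 2` edges, and to induct on the graph without `s`. A vertex of degree at most
`(ℓ - 1) / 2` is such a set. If there is none, the degrees of the two ends of a longest path add up
to at least `ℓ`, hence to more than its length; by pigeonhole the path can then be rearranged into
one with adjacent ends. No edge leaves its vertex set, as one would extend the closed-up path. So
these at most `ℓ` vertices only meet edges among themselves.
-/

section

variable {V : Type*} {G : SimpleGraph V}

section Rearrangement

variable {u v : V}

theorem exists_walk_support_perm_of_adj_getVert_succ (p : G.Walk u v) {i : ℕ} (hi : i < p.length)
    (hadj : G.Adj u (p.getVert (i + 1))) :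
    ∃ q : G.Walk (p.getVert i) v, q.support.Perm p.support := by
  refine ⟨(p.take i).reverse.append (.cons hadj (p.drop (i + 1))), ?_⟩
  calc
    _ = (p.support.take (i + 1)).reverse ++ p.support.drop (i + 1) := by
      simp [Walk.support_append, Walk.support_take, Nat.min_eq_left hi]
    List.Perm _ (p.support.take (i + 1) ++ p.support.drop (i + 1)) :=
      (List.reverse_perm _).append_right _
    _ = p.support := List.take_append_drop _ _

theorem exists_walk_support_perm_of_adj_ends (p : G.Walk u v) (hadj : G.Adj v u) {y : V}
    (hy : y ∈ p.support) : ∃ (x : V) (q : G.Walk y x), q.support.Perm p.support := by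
  classical
  let c : G.Walk y y := (p.dropUntil y hy).append (.cons hadj (p.takeUntil y hy))
  have hc : ¬ c.Nil := by simp [c, Walk.nil_append_iff]
  refine ⟨c.penultimate, c.dropLast, (List.perm_cons y).1 ?_⟩
  calc
    List.Perm (y :: c.dropLast.support) (c.dropLast.support ++ [y]) :=
      (List.perm_append_singleton _ _).symm
    _ = (p.dropUntil y hy).support ++ (p.takeUntil y hy).support := by
      rw [Walk.support_dropLast_concat hc, Walk.support_append, Walk.support_cons, List.tail_cons]
    List.Perm _ ((p.takeUntil y hy).support ++ (p.dropUntil y hy).support) :=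
      List.perm_append_comm
    _ = (p.takeUntil y hy).support ++ y :: (p.dropUntil y hy).support.tail := by
      rw [Walk.cons_tail_support]
    List.Perm _ (y :: ((p.takeUntil y hy).support ++ (p.dropUntil y hy).support.tail)) :=
      List.perm_middle
    _ = y :: p.support := by rw [← Walk.support_append, Walk.take_spec]

theorem exists_adj_getVert_succ_and_adj_getVert {p : G.Walk u v}
    (hu : ∀ w, G.Adj u w → w ∈ p.support) (hv : ∀ w, G.Adj v w → w ∈ p.support)
    (hdeg : p.length < (G.neighborSet u).ncard + (G.neighborSet v).ncard) :
    ∃ i < p.length, G.Adj u (p.getVert (i + 1)) ∧ G.Adj v (p.getVert i) := by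
  classical
  let A := {i ∈ Finset.range p.length | G.Adj u (p.getVert (i + 1))}
  let B := {i ∈ Finset.range p.length | G.Adj v (p.getVert i)}
  have hA : (G.neighborSet u).ncard ≤ A.card := by
    rw [← Set.ncard_coe_finset]
    refine (Set.ncard_le_ncard (fun w hw ↦ ?_) (A.finite_toSet.image _)).trans
      (Set.ncard_image_le (f := fun i ↦ p.getVert (i + 1)))
    obtain ⟨j, rfl, hj⟩ := Walk.mem_support_iff_exists_getVert.1 (hu w hw)
    obtain _ | i := j
    · simp at hw
    · exact ⟨i, by simpa [A] using ⟨hj, hw⟩, rfl⟩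
  have hB : (G.neighborSet v).ncard ≤ B.card := by
    rw [← Set.ncard_coe_finset]
    refine (Set.ncard_le_ncard (fun w hw ↦ ?_) (B.finite_toSet.image _)).trans
      (Set.ncard_image_le (f := p.getVert))
    obtain ⟨i, rfl, hi⟩ := Walk.mem_support_iff_exists_getVert.1 (hv w hw)
    have hne : i ≠ p.length := by rintro rfl; simp at hw
    exact ⟨i, by simpa [B] using ⟨hi.lt_of_ne hne, hw⟩, rfl⟩
  obtain ⟨i, hi⟩ := Finset.inter_nonempty_of_card_lt_card_add_card
    (s := Finset.range p.length) (Finset.filter_subset _ _) (Finset.filter_subset _ _)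
    (show _ < A.card + B.card by rw [Finset.card_range]; omega)
  simp only [Finset.mem_inter, Finset.mem_filter, Finset.mem_range] at hi
  exact ⟨i, hi.1.1, hi.1.2, hi.2.2⟩

end Rearrangement

section LongestPath

/-- The walk `p` is a path, and no path of the graph, whatever its ends, is longer. -/
def IsLongestPath_s10 {u v : V} (p : G.Walk u v) : Prop :=
  p.IsPath ∧ ∀ ⦃a b : V⦄ (q : G.Walk a b), q.IsPath → q.length ≤ p.length

variable (G) in
theorem exists_isLongestPath [Nonempty V] [Finite G.edgeSet] :
    ∃ (u v : V) (p : G.Walk u v), IsLongestPath_s10 p := by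
  obtain ⟨u, v, p, hp, hmax⟩ := Walk.exists_isPath_forall_isPath_length_le_length G
  exact ⟨u, v, p, hp, hmax⟩

namespace IsLongestPath_s10

variable {u v : V} {p : G.Walk u v}

theorem of_support_perm (hp : IsLongestPath_s10 p) {a b : V} {q : G.Walk a b}
    (hq : q.support.Perm p.support) : IsLongestPath_s10 q := by
  have hlen : q.length = p.length := by simpa using hq.length_eq
  exact ⟨.mk' (hq.nodup_iff.2 hp.1.support_nodup), hlen ▸ hp.2⟩

theorem reverse (hp : IsLongestPath_s10 p) : IsLongestPath_s10 p.reverse :=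
  hp.of_support_perm (by rw [Walk.support_reverse]; exact List.reverse_perm _)

theorem mem_support_of_adj_start (hp : IsLongestPath_s10 p) {w : V} (hw : G.Adj u w) :
    w ∈ p.support := by
  by_contra hmem
  have hle := hp.2 _ (hp.1.cons (hu := hmem) (h := hw.symm))
  simp at hle

theorem mem_support_of_adj_end (hp : IsLongestPath_s10 p) {w : V} (hw : G.Adj v w) :
    w ∈ p.support := by
  simpa using hp.reverse.mem_support_of_adj_start hw

theorem mem_support_of_adj_of_adj_ends (hp : IsLongestPath_s10 p) (hadj : G.Adj v u) {y z : V}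
    (hy : y ∈ p.support) (hyz : G.Adj y z) : z ∈ p.support := by
  obtain ⟨x, q, hq⟩ := exists_walk_support_perm_of_adj_ends p hadj hy
  exact hq.mem_iff.1 ((hp.of_support_perm hq).mem_support_of_adj_start hyz)

theorem mem_support_of_adj_of_length_lt (hp : IsLongestPath_s10 p)
    (hdeg : p.length < (G.neighborSet u).ncard + (G.neighborSet v).ncard) {y z : V}
    (hy : y ∈ p.support) (hyz : G.Adj y z) : z ∈ p.support := by
  obtain ⟨i, hi, hui, hvi⟩ := exists_adj_getVert_succ_and_adj_getVert
    (fun _ ↦ hp.mem_support_of_adj_start) (fun _ ↦ hp.mem_support_of_adj_end) hdeg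
  obtain ⟨q, hq⟩ := exists_walk_support_perm_of_adj_getVert_succ p hi hui
  rw [← hq.mem_iff] at hy ⊢
  exact (hp.of_support_perm hq).mem_support_of_adj_of_adj_ends hvi hy hyz

end IsLongestPath_s10

end LongestPath

section EdgeCounting

variable (G)

theorem ncard_edgeSet_induce (s : Set V) :
    (G.induce s).edgeSet.ncard = {e ∈ G.edgeSet | ∀ x ∈ e, x ∈ s}.ncard := by
  rw [← Set.ncard_image_of_injective _ (Sym2.map.injective Subtype.val_injective)]
  congr 1
  ext e
  induction e with | _ x y
  constructor
  · rintro ⟨e, he, hxy⟩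
    induction e with | _ a b
    rw [← hxy]
    exact ⟨he, by simp⟩
  · rintro ⟨hadj, hs⟩
    exact ⟨s(⟨x, hs x (by simp)⟩, ⟨y, hs y (by simp)⟩), hadj, rfl⟩

theorem ncard_edgeSet_induce_compl_add [Finite G.edgeSet] (s : Set V) :
    (G.induce sᶜ).edgeSet.ncard + {e ∈ G.edgeSet | ∃ x ∈ s, x ∈ e}.ncard = G.edgeSet.ncard := by
  rw [ncard_edgeSet_induce, ← Set.ncard_inter_add_ncard_sdiff_eq_ncard G.edgeSet
    {e | ∀ x ∈ e, x ∈ sᶜ}]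
  congr 2
  ext e
  simp [and_comm]

theorem two_mul_ncard_edgeSet_le [Finite V] :
    2 * G.edgeSet.ncard ≤ Nat.card V * (Nat.card V - 1) := by
  classical
  have := Fintype.ofFinite V
  rw [Set.ncard_eq_toFinset_card', Nat.card_eq_fintype_card, mul_comm,
    ← Nat.le_div_iff_mul_le two_pos, ← Nat.choose_two_right]
  exact G.card_edgeFinset_le_card_choose_two

theorem ncard_incidenceSet (x : V) : (G.incidenceSet x).ncard = (G.neighborSet x).ncard := by
  classical
  exact Nat.card_congr (G.incidenceSetEquivNeighborSet x)

variable {G} in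
theorem two_mul_ncard_edgeSet_meeting_le_of_adj_closed {s : Set V} [Finite s]
    (hs : ∀ x ∈ s, ∀ y, G.Adj x y → y ∈ s) :
    2 * {e ∈ G.edgeSet | ∃ x ∈ s, x ∈ e}.ncard ≤ s.ncard * (s.ncard - 1) := by
  have hinside : {e ∈ G.edgeSet | ∃ x ∈ s, x ∈ e} = {e ∈ G.edgeSet | ∀ x ∈ e, x ∈ s} := by
    ext e
    induction e with | _ x y
    have hxy : G.Adj x y → (x ∈ s ↔ y ∈ s) := fun h ↦ ⟨(hs x · y h), (hs y · x h.symm)⟩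
    simpa using fun h ↦ by simp [hxy h, and_or_left, exists_or]
  rw [hinside, ← ncard_edgeSet_induce]
  exact two_mul_ncard_edgeSet_le (G.induce s)

end EdgeCounting

section ErdosGallai

theorem length_lt_of_forall_isPath_length_ne {ℓ : ℕ}
    (hno : ∀ ⦃u v : V⦄ (p : G.Walk u v), p.IsPath → p.length ≠ ℓ) {u v : V} {p : G.Walk u v}
    (hp : p.IsPath) : p.length < ℓ := by
  by_contra! hle
  exact hno (p.take ℓ) (hp.take ℓ) (by simpa using hle)

theorem ncard_setOf_mem_support {u v : V} {p : G.Walk u v} (hp : p.IsPath) :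
    {x | x ∈ p.support}.ncard = p.length + 1 := by
  classical
  rw [← List.coe_toFinset, Set.ncard_coe_finset, List.toFinset_card_of_nodup hp.support_nodup,
    Walk.length_support]

theorem exists_nonempty_two_mul_ncard_edgeSet_meeting_le [Finite V] [Nonempty V] {ℓ : ℕ}
    (hno : ∀ ⦃u v : V⦄ (p : G.Walk u v), p.IsPath → p.length ≠ ℓ) :
    ∃ s : Set V, s.Nonempty ∧
      2 * {e ∈ G.edgeSet | ∃ x ∈ s, x ∈ e}.ncard ≤ (ℓ - 1) * s.ncard := by
  by_cases hlow : ∃ x, 2 * (G.neighborSet x).ncard ≤ ℓ - 1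
  · obtain ⟨x, hx⟩ := hlow
    refine ⟨{x}, Set.singleton_nonempty x, ?_⟩
    simpa [← ncard_incidenceSet, incidenceSet] using hx
  · push Not at hlow
    obtain ⟨u, v, p, hp⟩ := exists_isLongestPath G
    have hlen : p.length < ℓ := length_lt_of_forall_isPath_length_ne hno hp.1
    have hdeg : p.length < (G.neighborSet u).ncard + (G.neighborSet v).ncard := by
      have hu := hlow u
      have hv := hlow v
      omega
    let s : Set V := {x | x ∈ p.support}
    have hcard : s.ncard = p.length + 1 := ncard_setOf_mem_support hp.1
    have hclosed : ∀ y ∈ s, ∀ z, G.Adj y z → z ∈ s :=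
      fun _ hy _ ↦ hp.mem_support_of_adj_of_length_lt hdeg hy
    refine ⟨s, ⟨u, p.start_mem_support⟩,
      (two_mul_ncard_edgeSet_meeting_le_of_adj_closed hclosed).trans ?_⟩
    rw [mul_comm, hcard]
    exact Nat.mul_le_mul_right _ (Nat.sub_le_sub_right hlen 1)

theorem two_mul_ncard_edgeSet_le_of_forall_isPath_length_ne [Finite V] {ℓ : ℕ}
    (hno : ∀ ⦃u v : V⦄ (p : G.Walk u v), p.IsPath → p.length ≠ ℓ) :
    2 * G.edgeSet.ncard ≤ (ℓ - 1) * Nat.card V := by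
  induction hn : Nat.card V using Nat.strong_induction_on generalizing V with
  | _ n ih =>
  subst hn
  cases isEmpty_or_nonempty V
  · simp [Set.eq_empty_of_isEmpty]
  obtain ⟨s, hs, hmeet⟩ := exists_nonempty_two_mul_ncard_edgeSet_meeting_le hno
  have hno_compl ⦃a b : ↥sᶜ⦄ (q : (G.induce sᶜ).Walk a b) (hq : q.IsPath) : q.length ≠ ℓ := by
    have hne := hno _ (hq.map (f := (Embedding.induce sᶜ).toHom) Subtype.val_injective)
    rwa [Walk.length_map] at hne
  have hcard : s.ncard + Nat.card ↥sᶜ = Nat.card V := s.ncard_add_ncard_compl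
  have hpos : 0 < s.ncard := hs.ncard_pos
  have hrest := ih _ (by omega) hno_compl rfl
  rw [← ncard_edgeSet_induce_compl_add G s, ← hcard]
  linarith

end ErdosGallai

theorem isCycle_cons_concat {v a b : V} {q : G.Walk a b} (hq : q.IsPath) (hpos : 0 < q.length)
    (hv : v ∉ q.support) (ha : G.Adj v a) (hb : G.Adj b v) :
    (Walk.cons ha (q.concat hb)).IsCycle := by
  rw [Walk.isCycle_iff_isPath_tail_and_le_length]
  refine ⟨by simpa using hq.concat hv hb, ?_⟩
  rw [Walk.length_cons, Walk.length_concat]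
  omega

theorem hasCycleLength_of_isPath_induce_neighborSet {v : V} {a b : G.neighborSet v}
    {p : (G.induce (G.neighborSet v)).Walk a b} (hp : p.IsPath) (hpos : 0 < p.length) :
    hasCycleLength G (p.length + 2) := by
  have ha : G.Adj v a := a.2
  have hb : G.Adj v b := b.2
  let q : G.Walk (a : V) b := p.map (Embedding.induce (G.neighborSet v)).toHom
  have hq : q.IsPath := hp.map Subtype.val_injective
  have hlen : q.length = p.length := Walk.length_map _ _
  have hv : v ∉ q.support := by
    intro hmem
    obtain ⟨x, -, hx⟩ := List.mem_map.1 (Walk.support_map _ p ▸ hmem)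
    exact x.2.ne hx.symm
  refine ⟨v, _, isCycle_cons_concat hq (hlen ▸ hpos) hv ha hb.symm, ?_⟩
  rw [Walk.length_cons, Walk.length_concat, hlen]

end

theorem stmt_10_general {α : Type*} (G : SimpleGraph α) (k : ℕ) (hk : 1 ≤ k)
    (hno : ¬ hasCycleLength G (2 * k + 1)) (v : α) [Finite (G.neighborSet v)] :
    2 * {e ∈ G.edgeSet | ∀ x ∈ e, G.Adj v x}.ncard ≤ (2 * k - 2) * (G.neighborSet v).ncard := by
  have hno_path ⦃a b : G.neighborSet v⦄ (p : (G.induce (G.neighborSet v)).Walk a b)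
      (hp : p.IsPath) : p.length ≠ 2 * k - 1 := by
    intro hlen
    have hcycle := hasCycleLength_of_isPath_induce_neighborSet hp (by omega)
    rw [hlen, show 2 * k - 1 + 2 = 2 * k + 1 by omega] at hcycle
    exact hno hcycle
  have h := two_mul_ncard_edgeSet_le_of_forall_isPath_length_ne hno_path
  rwa [ncard_edgeSet_induce] at h

theorem stmt_10 {α : Type*} [Fintype α] (G : SimpleGraph α) (k : ℕ) (hk : 1 ≤ k)
    (hno : ¬ hasCycleLength G (2 * k + 1)) (v : α) :
    2 * {e ∈ G.edgeSet | ∀ x ∈ e, G.Adj v x}.ncard ≤ (2 * k - 1) * Fintype.card α :=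
  (stmt_10_general G k hk hno v).trans <|
    Nat.mul_le_mul (by omega) (Nat.card_eq_fintype_card (α := α) ▸ Set.ncard_le_card _)
end

section
/- Let k ≥ 2 and ℓ ≥ 3, and let G be a finite simple graph containing no cycle of length 2k + 1. Suppose G contains pairwise vertex-disjoint paths p₁, …, p_ℓ, where each p_j is a path of length k − 2 (having k − 1 vertices) with endpoints u_j and v_j (with u_j = v_j when k = 2), and suppose u_iu_j is an edge of G for all i ≠ j. Then for any j ≠ j′ and any two distinct vertices w ∈ N(v_j) and w′ ∈ N(v_{j′}) such that neither w nor w′ lies on any of the paths p₁, …, p_ℓ, the pair ww′ is not an edge of G. -/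
open SimpleGraph

/-!
For `w ∈ N(v_j)` and `w' ∈ N(v_{j'})` and any third index `m`, the edge `ww'` would close the path
`w, v_j, …, u_j, u_m, u_{j'}, …, v_{j'}, w'`, which has `2(k - 1) + 3` vertices, into a cycle of
length `2k + 1`. Removing the edges `u_j u_m` and `ww'` splits that cycle into two disjoint paths.
-/

section DisjointPaths

variable {α : Type*} {G : SimpleGraph α} {a b c d : α} {p : G.Walk a b} {q : G.Walk c d}

theorem isCycle_cons_append_cons (hp : p.IsPath) (hq : q.IsPath)
    (hpq : p.support.Disjoint q.support) (hda : G.Adj d a) (hbc : G.Adj b c)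
    (hlen : 0 < p.length ∨ 0 < q.length) :
    ((Walk.cons hda p).append (Walk.cons hbc q)).IsCycle := by
  have hd : d ∉ p.support := fun hd ↦ hpq hd q.end_mem_support
  have hb : b ∉ q.support := hpq p.end_mem_support
  refine (hp.cons hd).isCycle_append (hq.cons hb) ?_ ?_
  · simpa only [Walk.support_cons, List.tail_cons] using hpq
  · simpa only [Walk.length_cons, Nat.lt_add_left_iff_pos] using hlen

theorem hasCycleLength_of_disjoint_isPath (hp : p.IsPath) (hq : q.IsPath)
    (hpq : p.support.Disjoint q.support) (hda : G.Adj d a) (hbc : G.Adj b c)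
    (hlen : 0 < p.length ∨ 0 < q.length) :
    hasCycleLength G (p.length + q.length + 2) := by
  refine ⟨d, _, isCycle_cons_append_cons hp hq hpq hda hbc hlen, ?_⟩
  simp only [Walk.length_append, Walk.length_cons]
  omega

end DisjointPaths

theorem stmt_11_general {α ι : Type*} (G : SimpleGraph α) (k : ℕ)
    (hk : 2 ≤ k) (hι : 3 ≤ ENat.card ι)
    (hno : ¬ hasCycleLength G (2 * k + 1))
    (u v : ι → α) (p : ∀ j, G.Walk (u j) (v j))
    (hpath : ∀ j, (p j).IsPath) (hlen : ∀ j, (p j).length = k - 2)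
    (hdisj : Pairwise fun i j ↦ (p i).support.Disjoint (p j).support)
    (hadj : Pairwise fun i j ↦ G.Adj (u i) (u j))
    {j j' : ι} (hjj' : j ≠ j') {w w' : α} (hw : G.Adj (v j) w) (hw' : G.Adj (v j') w')
    (hwp : ∀ i, w ∉ (p i).support) (hwp' : ∀ i, w' ∉ (p i).support) :
    ¬ G.Adj w w' := by
  intro hww'
  obtain ⟨m, hmj, hmj'⟩ := ENat.exists_ne_ne_of_three_le hι j j'
  have hum : u m ∈ (p m).support := (p m).start_mem_support
  have hump {i : ι} (hmi : m ≠ i) : u m ∉ (p i).support := fun h ↦ hdisj hmi hum h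
  have humw : u m ≠ w := ne_of_mem_of_not_mem hum (hwp m)
  have humw' : u m ≠ w' := ne_of_mem_of_not_mem hum (hwp' m)
  let P : G.Walk w (u j) := .cons hw.symm (p j).reverse
  let Q : G.Walk (u m) w' := .cons (hadj hmj') ((p j').concat hw')
  have hP : P.IsPath := (hpath j).reverse.cons (by simpa using hwp j)
  have hQ : Q.IsPath := ((hpath j').concat (hwp' j') hw').cons
    (by simp [Walk.support_concat, hump hmj', humw'])
  have hPQ : P.support.Disjoint Q.support := by
    simp [P, Q, Walk.support_concat, hwp j', hww'.ne', humw, hump hmj, hwp' j, hdisj hjj']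
  have hcycle : hasCycleLength G (P.length + Q.length + 2) :=
    hasCycleLength_of_disjoint_isPath hP hQ hPQ hww'.symm (hadj hmj.symm) (.inl (by simp [P]))
  have hlength : P.length + Q.length + 2 = 2 * k + 1 := by
    simp only [P, Q, Walk.length_cons, Walk.length_reverse, Walk.length_concat, hlen]
    omega
  exact hno (hlength ▸ hcycle)

theorem stmt_11 {α : Type*} [Fintype α] (G : SimpleGraph α) (k ℓ : ℕ)
    (hk : 2 ≤ k) (hl : 3 ≤ ℓ)
    (hno : ¬ hasCycleLength G (2 * k + 1))
    (u v : Fin ℓ → α) (p : ∀ j, G.Walk (u j) (v j))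
    (hpath : ∀ j, (p j).IsPath) (hlen : ∀ j, (p j).length = k - 2)
    (hdisj : ∀ i j, i ≠ j → ∀ x, x ∈ (p i).support → x ∉ (p j).support)
    (hadj : ∀ i j, i ≠ j → G.Adj (u i) (u j)) :
    ∀ j j', j ≠ j' → ∀ w w' : α, w ≠ w' →
      G.Adj (v j) w → G.Adj (v j') w' →
      (∀ i, w ∉ (p i).support) → (∀ i, w' ∉ (p i).support) →
      ¬ G.Adj w w' := by
  intro j j' hjj' w w' _ hw hw' hwp hwp'
  exact stmt_11_general G k hk (by simpa using hl) hno u v p hpath hlen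
    (fun _ _ h x ↦ hdisj _ _ h x) (fun _ _ h ↦ hadj _ _ h) hjj' hw hw' hwp hwp'
end

section
/- Let k ≥ 2 and ℓ ≥ 2, and let G be a finite simple graph containing no cycle of length 2k + 1. Suppose G contains pairwise vertex-disjoint paths p₁, …, p_ℓ, where each p_j is a path of length k − 2 (having k − 1 vertices) with endpoints u_j and v_j (with u_j = v_j when k = 2), and suppose u_iu_j is an edge of G for all i ≠ j. Let j ≠ j′ and let w, w_j, w_{j′} be three distinct vertices, none of which lies on any of the paths p₁, …, p_ℓ, with w_j ∈ N(v_j) and w_{j′} ∈ N(v_{j′}). Then w is not adjacent to both w_j and w_{j′}. -/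
open SimpleGraph

section

variable {α : Type*} {G : SimpleGraph α} {u v u' v' : α}

theorem isCycle_cons_append_cons_reverse {p : G.Walk u v} {q : G.Walk u' v'}
    (hp : p.IsPath) (hq : q.IsPath) (hpq : p.support.Disjoint q.support)
    (hlen : 0 < p.length ∨ 0 < q.length) (hu : G.Adj u' u) (hv : G.Adj v v') :
    ((Walk.cons hu p).append (Walk.cons hv q.reverse)).IsCycle := by
  have hu'p : u' ∉ p.support := fun h ↦ hpq h q.start_mem_support
  have hvq : v ∉ q.reverse.support := by
    simpa only [Walk.support_reverse, List.mem_reverse] using hpq p.end_mem_support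
  refine (hp.cons hu'p).isCycle_append (hq.reverse.cons hvq) ?_ ?_
  · simpa only [Walk.support_cons, List.tail_cons, Walk.support_reverse,
      List.disjoint_reverse_right] using hpq
  · simpa only [Walk.length_cons, Walk.length_reverse, Nat.lt_add_left_iff_pos] using hlen

theorem hasCycleLength_of_disjoint_paths {p : G.Walk u v} {q : G.Walk u' v'}
    (hp : p.IsPath) (hq : q.IsPath) (hpq : p.support.Disjoint q.support)
    (hlen : 0 < p.length ∨ 0 < q.length) (hu : G.Adj u u') (hv : G.Adj v v') :
    hasCycleLength G (p.length + q.length + 2) := by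
  refine ⟨u', _, isCycle_cons_append_cons_reverse hp hq hpq hlen hu.symm hv, ?_⟩
  simp only [Walk.length_append, Walk.length_cons, Walk.length_reverse]
  omega

theorem stmt_12_general {p : G.Walk u v} {q : G.Walk u' v'}
    (hno : ¬ hasCycleLength G (p.length + q.length + 5))
    (hp : p.IsPath) (hq : q.IsPath) (hpq : p.support.Disjoint q.support) (hu : G.Adj u u')
    {w x x' : α} (hxx' : x ≠ x')
    (hwp : w ∉ p.support) (hwq : w ∉ q.support) (hxp : x ∉ p.support) (hxq : x ∉ q.support)
    (hx'p : x' ∉ p.support) (hx'q : x' ∉ q.support) (hvx : G.Adj v x) (hv'x' : G.Adj v' x') :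
    ¬ (G.Adj w x ∧ G.Adj w x') := by
  rintro ⟨hwx, hwx'⟩
  -- The cycle is the union of `u ⋯ v x`, `u' ⋯ v' x' w` and the edges `uu'`, `xw`.
  have hpx : (p.concat hvx).IsPath := hp.concat hxp hvx
  have hqx'w : ((q.concat hv'x').concat hwx'.symm).IsPath := by
    refine (hq.concat hx'q hv'x').concat ?_ hwx'.symm
    simp [Walk.support_concat, hwq, hwx'.ne]
  have hdisj : (p.concat hvx).support.Disjoint
      ((q.concat hv'x').concat hwx'.symm).support := by
    simp [Walk.support_concat, hpq, hwp, hx'p, hxq, hxx'.symm, hwx.ne]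
  have hpos : 0 < (p.concat hvx).length := by simp
  have hcycle := hasCycleLength_of_disjoint_paths hpx hqx'w hdisj (.inl hpos) hu hwx.symm
  apply hno
  convert hcycle using 1
  simp only [Walk.length_concat]
  omega

end

theorem stmt_12 {α : Type*} [Fintype α] (G : SimpleGraph α) (k ℓ : ℕ)
    (hk : 2 ≤ k) (hl : 2 ≤ ℓ)
    (hno : ¬ hasCycleLength G (2 * k + 1))
    (u v : Fin ℓ → α) (p : ∀ j, G.Walk (u j) (v j))
    (hpath : ∀ j, (p j).IsPath) (hlen : ∀ j, (p j).length = k - 2)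
    (hdisj : ∀ i j, i ≠ j → ∀ x, x ∈ (p i).support → x ∉ (p j).support)
    (hadj : ∀ i j, i ≠ j → G.Adj (u i) (u j)) :
    ∀ j j', j ≠ j' → ∀ w wj wj' : α, w ≠ wj → w ≠ wj' → wj ≠ wj' →
      (∀ i, w ∉ (p i).support) → (∀ i, wj ∉ (p i).support) → (∀ i, wj' ∉ (p i).support) →
      G.Adj (v j) wj → G.Adj (v j') wj' →
      ¬ (G.Adj w wj ∧ G.Adj w wj') := by
  intro j j' hjj' w wj wj' _ _ hne hw hwj hwj' hvj hvj'
  have hlen_sum : (p j).length + (p j').length + 5 = 2 * k + 1 := by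
    rw [hlen, hlen]
    omega
  exact stmt_12_general (hlen_sum ▸ hno) (hpath j) (hpath j') (@(hdisj j j' hjj'))
    (hadj j j' hjj') hne (hw j) (hw j') (hwj j) (hwj j') (hwj' j) (hwj' j') hvj hvj'
end

section
/- Let G be a finite simple graph, u a vertex of G, ℓ ≥ 6 an even integer, and fix a linear order on the vertices of G. For a vertex u′ with d(u′,u) = ℓ, call a vertex x the representative of u′ if d(x,u) = 4, d(x,u′) = ℓ − 4 (so x lies on a shortest path from u′ to u), and x is minimal in the linear order among all vertices with these two properties. Let R be the set of all vertices of G that are the representative of at least one vertex at distance ℓ from u. Then |R| · (ℓ/2 − 1) ≤ |{w ∈ V(G) : d(w,u) is even and 4 ≤ d(w,u) ≤ ℓ}|. -/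
open SimpleGraph

/-!
If `x` is the representative of `u'` and `w` lies on a shortest path from `u'` to `u` through `x`,
at distance at least `d(x, u)` from `u`, then `x` is also the representative of `w`: every vertex
competing for `w` competes for `u'` as well. So a vertex `x` that represents some vertex at distance
`ℓ` from `u` also represents some vertex `w` at each distance `d` with `d(x, u) ≤ d ≤ ℓ`. A vertex
has at most one representative, so the `w` chosen for different pairs `(x, d)` are different.
-/

/-- The intersection of the spheres of radius `r` about `u` and of radius `s` about `v`. When
`d(u, v) = r + s` and `r ≠ 0`, this is the set of vertices on shortest paths from `u` to `v` at
distance `r` from `u`. -/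
def sphereInter {α : Type*} (G : SimpleGraph α) (u : α) (r : ℕ) (v : α) (s : ℕ) : Set α :=
  {y | G.dist y u = r ∧ G.dist y v = s}

/-- For `0 < r ≤ ℓ`, the set of representatives of the vertices at distance `ℓ` from `u`, where a
vertex is represented by the least vertex at distance `r` from `u` on its shortest paths to `u`. -/
def representatives {α : Type*} [LE α] (G : SimpleGraph α) (u : α) (r ℓ : ℕ) : Set α :=
  {x | ∃ u', G.dist u' u = ℓ ∧ IsLeast (sphereInter G u r u' (ℓ - r)) x}

section Graph

variable {α : Type*} {G : SimpleGraph α} {u u' w x : α} {r d ℓ : ℕ}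

theorem exists_dist_eq_and_dist_eq_sub (h : G.Reachable u w) (hd : d ≤ G.dist u w) :
    ∃ v, G.Reachable v w ∧ G.dist u v = d ∧ G.dist v w = G.dist u w - d := by
  obtain ⟨p, hp⟩ := h.exists_walk_length_eq_dist
  refine ⟨p.getVert d, (p.drop d).reachable, ?_, ?_⟩
  · rw [← length_eq_dist_of_subwalk hp (p.isSubwalk_take d), Walk.take_length, hp, min_eq_left hd]
  · rw [← length_eq_dist_of_subwalk hp (p.isSubwalk_drop d), Walk.drop_length, hp]

theorem exists_mem_sphereInter_sphereInter (hr : r ≠ 0) (hrd : r ≤ d) (hdℓ : d ≤ ℓ)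
    (hu' : G.dist u' u = ℓ) (hx : x ∈ sphereInter G u r u' (ℓ - r)) :
    ∃ w ∈ sphereInter G u d u' (ℓ - d), x ∈ sphereInter G u r w (d - r) := by
  obtain ⟨hxu, hxu'⟩ := hx
  have reach_xu : G.Reachable x u := .of_dist_ne_zero (by omega)
  have reach_u'u : G.Reachable u' u := .of_dist_ne_zero (by omega)
  obtain ⟨w, reach_wu', hxw, hwu'⟩ :=
    exists_dist_eq_and_dist_eq_sub (d := d - r) (reach_xu.trans reach_u'u.symm) (by omega)
  have upper : G.dist w u ≤ G.dist x w + G.dist x u :=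
    G.dist_comm (u := x) (v := w) ▸ reach_xu.dist_triangle_right w
  have lower : G.dist u' u ≤ G.dist w u' + G.dist w u :=
    G.dist_comm (u := w) (v := u') ▸ reach_wu'.symm.dist_triangle_left u
  exact ⟨w, ⟨by omega, by omega⟩, hxu, hxw⟩

theorem sphereInter_subset_sphereInter (hr : r ≠ 0) (hrd : r ≤ d) (hdℓ : d ≤ ℓ)
    (hu' : G.dist u' u = ℓ) (hw : w ∈ sphereInter G u d u' (ℓ - d)) :
    sphereInter G u r w (d - r) ⊆ sphereInter G u r u' (ℓ - r) := by
  obtain ⟨hwu, hwu'⟩ := hw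
  rintro y ⟨hyu, hyw⟩
  have reach_yu : G.Reachable y u := .of_dist_ne_zero (by omega)
  have reach_wu : G.Reachable w u := .of_dist_ne_zero (by omega)
  have upper : G.dist y u' ≤ G.dist y w + G.dist w u' :=
    (reach_yu.trans reach_wu.symm).dist_triangle_left u'
  have lower : G.dist u' u ≤ G.dist y u' + G.dist y u :=
    G.dist_comm (u := y) (v := u') ▸ reach_yu.dist_triangle_right u'
  exact ⟨hyu, by omega⟩

theorem representatives_antitoneOn [Preorder α] (hr : r ≠ 0) :
    AntitoneOn (representatives G u r) (Set.Ici r) := by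
  rintro d hrd ℓ - hdℓ x ⟨u', hu', hx, hmin⟩
  obtain ⟨w, hw, hxw⟩ := exists_mem_sphereInter_sphereInter hr hrd hdℓ hu' hx
  exact ⟨w, hw.1, hxw, lowerBounds_mono_set (sphereInter_subset_sphereInter hr hrd hdℓ hu' hw) hmin⟩

end Graph

theorem encard_setOf_even_and_le_and_le (m n : ℕ) :
    {k : ℕ | Even k ∧ 2 * m ≤ k ∧ k ≤ n}.encard = (n / 2 + 1 - m : ℕ) := by
  have image_two_mul :
      {k : ℕ | Even k ∧ 2 * m ≤ k ∧ k ≤ n} = (2 * ·) '' (Finset.Icc m (n / 2) : Set ℕ) := by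
    ext k
    simp only [Set.mem_ofPred_eq, even_iff_exists_two_mul, Set.mem_image, Finset.coe_Icc,
      Set.mem_Icc]
    constructor
    · rintro ⟨⟨i, rfl⟩, hm, hn⟩
      exact ⟨i, by omega, rfl⟩
    · rintro ⟨i, hi, rfl⟩
      exact ⟨⟨i, rfl⟩, by omega, by omega⟩
  rw [image_two_mul, (mul_right_injective₀ two_ne_zero).encard_image,
    Set.encard_coe_eq_coe_finsetCard, Nat.card_Icc]

theorem stmt_14_general {α : Type*} [PartialOrder α] (G : SimpleGraph α) (u : α) {r ℓ : ℕ}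
    (hr : r ≠ 0) {D : Set ℕ} (hD : D ⊆ Set.Icc r ℓ) :
    (representatives G u r ℓ).encard * D.encard ≤ {w | G.dist w u ∈ D}.encard := by
  have exists_represented : ∀ x ∈ representatives G u r ℓ, ∀ d ∈ D,
      ∃ w, G.dist w u = d ∧ IsLeast (sphereInter G u r w (d - r)) x := fun x hx d hd ↦
    have ⟨hrd, hdℓ⟩ := hD hd
    representatives_antitoneOn hr hrd (hrd.trans hdℓ) hdℓ hx
  choose! f dist_f isLeast_f using exists_represented
  rw [← Set.encard_prod]
  refine Set.encard_le_encard_of_injOn (f := fun p ↦ f p.1 p.2) ?_ ?_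
  · rintro ⟨x, d⟩ ⟨hx, hd⟩
    simpa only [Set.mem_ofPred_eq, dist_f x hx d hd] using hd
  · rintro ⟨x, d⟩ ⟨hx, hd⟩ ⟨y, e⟩ ⟨hy, he⟩ (hf : f x d = f y e)
    obtain rfl : d = e := by rw [← dist_f x hx d hd, hf, dist_f y hy e he]
    exact Prod.ext ((isLeast_f x hx d hd).unique (hf ▸ isLeast_f y hy d he)) rfl

theorem stmt_14 {α : Type*} [Fintype α] [LinearOrder α] (G : SimpleGraph α)
    (u : α) (ℓ : ℕ) (hl : 6 ≤ ℓ) (hle : Even ℓ) :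
    {x : α | ∃ u', G.dist u' u = ℓ ∧
        ((G.dist x u = 4 ∧ G.dist x u' = ℓ - 4) ∧
          ∀ y : α, G.dist y u = 4 ∧ G.dist y u' = ℓ - 4 → x ≤ y)}.ncard * (ℓ / 2 - 1)
      ≤ {w : α | Even (G.dist w u) ∧ 4 ≤ G.dist w u ∧ G.dist w u ≤ ℓ}.ncard := by
  have encard_le := stmt_14_general G u (D := {d | Even d ∧ 4 ≤ d ∧ d ≤ ℓ}) four_ne_zero
    fun _ hd ↦ hd.2
  rw [encard_setOf_even_and_le_and_le 2 ℓ, ← Set.coe_ncard_eq_encard,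
    ← Set.coe_ncard_eq_encard] at encard_le
  exact_mod_cast encard_le
end

section
/- Let 1 < γ ≤ 2 and let (G, u, v, U, V) be γ-good. Let x ∈ U and y ∈ V with xy not an edge of G, and let G′ be the graph obtained from G by adding the edge xy. If G′ has an isolated vertex, then there exist a pair of nonadjacent vertices a, b of G′ and disjoint vertex sets U′ ⊇ U and V′ ⊇ V such that (G′ + ab, u, v, U′, V′) is γ-good. -/
open SimpleGraph

/-- `b_U = |V₁| + |U| − γ|V| − δ`, where `V₁ = V ∖ N_G(u)` and `δ = 1/(γ−1)`. -/
noncomputable def bU {α : Type*} (γ : ℝ) (G : SimpleGraph α) (u : α) (U V : Set α) : ℝ :=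
  ((V \ G.neighborSet u).ncard : ℝ) + U.ncard - γ * V.ncard - 1 / (γ - 1)

/-- `b_V = |U₁| + |V| − γ|U| − δ`, where `U₁ = U ∖ N_G(v)` and `δ = 1/(γ−1)`. -/
noncomputable def bV {α : Type*} (γ : ℝ) (G : SimpleGraph α) (v : α) (U V : Set α) : ℝ :=
  ((U \ G.neighborSet v).ncard : ℝ) + V.ncard - γ * U.ncard - 1 / (γ - 1)

/-- The tuple `(G, u, v, U, V)` is `γ`-good. -/
def GammaGood {α : Type*} (γ : ℝ) (G : SimpleGraph α) (u v : α) (U V : Set α) : Prop :=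
  G.Adj u v ∧ u ∈ U ∧ v ∈ V ∧ Disjoint U V ∧
  -- (1*): exactly one connected component contains an edge, its vertex set is `U ∪ V`,
  -- and it is bipartite with parts `U` and `V` (both independent sets)
  (∃! c : G.ConnectedComponent, ∃ x y, G.Adj x y ∧ G.connectedComponentMk x = c) ∧
  {w | G.connectedComponentMk w = G.connectedComponentMk u} = U ∪ V ∧
  (∀ a ∈ U, ∀ b ∈ U, ¬ G.Adj a b) ∧
  (∀ a ∈ V, ∀ b ∈ V, ¬ G.Adj a b) ∧
  -- (2*): every vertex of `U ∪ V` has a neighbor in `U₀ ∪ V₀ = N(v) ∪ N(u)`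
  (∀ w ∈ U ∪ V, ∃ z ∈ G.neighborSet v ∪ G.neighborSet u, G.Adj w z) ∧
  -- (3*) and (4*)
  bU γ G u U V ≤ 0 ∧ bV γ G v U V ≤ 0 ∧ bU γ G u U V + bV γ G v U V ≤ -2

/-!
If some `a ∈ U` and `b ∈ V` are nonadjacent, adding `ab` preserves goodness with the same `U` and
`V`: more edges inside the bipartition only shrink `U₁` and `V₁`. Otherwise the component is
complete bipartite, so `U₁ = V₁ = ∅`, and an isolated vertex can be attached to `u` or to `v` so as
to join the smaller of the two parts. In that case `b_U + b_V ≤ -2` holds automatically: writing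
`t = γ - 1`, it reads `2 ≤ t |U| + t |V| + 2 / t`, and `2 ≤ t n + 1 / t` for every `n ≥ 1` by AM-GM.
The same inequality gives `b_U ≤ 0` after the smaller part `U` has grown by one vertex.
-/

section

variable {α : Type*} {γ : ℝ} {G H : SimpleGraph α} {u v x y z : α} {U V : Set α}

theorem le_addEdge : G ≤ addEdge G x y := le_sup_left

theorem addEdge_adj_self (hne : x ≠ y) : (addEdge G x y).Adj x y :=
  Or.inr ((edge_adj x y x y).2 ⟨Or.inl ⟨rfl, rfl⟩, hne⟩)

theorem isBipartiteWith_addEdge (h : G.IsBipartiteWith U V) (hx : x ∈ U) (hy : y ∈ V) :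
    (addEdge G x y).IsBipartiteWith U V where
  disjoint := h.disjoint
  mem_of_adj a b hab := by
    rcases hab with hab | hab
    · exact h.mem_of_adj hab
    · obtain ⟨⟨rfl, rfl⟩ | ⟨rfl, rfl⟩, -⟩ := (edge_adj x y a b).1 hab
      · exact Or.inl ⟨hx, hy⟩
      · exact Or.inr ⟨hy, hx⟩

theorem isBipartiteWith_insert_left (h : G.IsBipartiteWith U V) (hz : z ∉ V) :
    G.IsBipartiteWith (insert z U) V where
  disjoint := Set.disjoint_insert_left.2 ⟨hz, h.disjoint⟩
  mem_of_adj _ _ hab := (h.mem_of_adj hab).imp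
    (And.imp_left (Set.mem_insert_of_mem z)) (And.imp_right (Set.mem_insert_of_mem z))

theorem reachable_of_adj_of_mem_neighborSet_union (huv : G.Adj u v)
    (hz : z ∈ G.neighborSet v ∪ G.neighborSet u) (hxz : G.Adj x z) : G.Reachable x u := by
  rcases hz with hvz | huz
  · exact hxz.reachable.trans ((Adj.reachable hvz).symm.trans huv.symm.reachable)
  · exact hxz.reachable.trans (Adj.reachable huz).symm

theorem setOf_connectedComponentMk_eq_union (h : G.IsBipartiteWith U V) (hu : u ∈ U)
    (hreach : ∀ w ∈ U ∪ V, G.Reachable w u) :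
    {w | G.connectedComponentMk w = G.connectedComponentMk u} = U ∪ V := by
  ext w
  refine ⟨fun hw => ?_, fun hw => ConnectedComponent.sound (hreach w hw)⟩
  obtain ⟨p⟩ := ConnectedComponent.exact hw
  cases p with
  | nil => exact Or.inl hu
  | cons hadj _ => exact isBipartiteWith_support_subset h ⟨_, hadj⟩

theorem bV_eq_bU : bV γ G v U V = bU γ G v V U := rfl

theorem bU_anti (hV : V.Finite) (hGH : G ≤ H) : bU γ H u U V ≤ bU γ G u U V := by
  have hcard : (V \ H.neighborSet u).ncard ≤ (V \ G.neighborSet u).ncard :=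
    Set.ncard_le_ncard (Set.sdiff_subset_sdiff_right fun _ hw => hGH hw) hV.sdiff
  unfold bU
  gcongr

theorem bU_of_subset_neighborSet (hVu : V ⊆ G.neighborSet u) :
    bU γ G u U V = U.ncard - γ * V.ncard - 1 / (γ - 1) := by
  simp only [bU, Set.sdiff_eq_empty.2 hVu, Set.ncard_empty, Nat.cast_zero, zero_add]

theorem two_le_mul_add_one_div {t n : ℝ} (ht : 0 < t) (hn : 1 ≤ n) : 2 ≤ t * n + 1 / t := by
  have hsq : t + 1 / t - 2 = (t - 1) ^ 2 / t := by
    field_simp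
    ring
  have hsq_nonneg : 0 ≤ (t - 1) ^ 2 / t := by positivity
  have htn : t ≤ t * n := le_mul_of_one_le_right ht.le hn
  linarith

theorem two_le_mul_ncard_add_one_div (hγ : 1 < γ) (hU : U.Finite) (hne : U.Nonempty) :
    2 ≤ (γ - 1) * U.ncard + 1 / (γ - 1) :=
  two_le_mul_add_one_div (sub_pos.2 hγ) (Nat.one_le_cast.2 ((Set.ncard_pos hU).2 hne))

namespace GammaGood

theorem adj (hg : GammaGood γ G u v U V) : G.Adj u v := hg.1

theorem left_mem (hg : GammaGood γ G u v U V) : u ∈ U := hg.2.1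

theorem right_mem (hg : GammaGood γ G u v U V) : v ∈ V := hg.2.2.1

theorem exists_adj_mem_neighborSet_union (hg : GammaGood γ G u v U V) :
    ∀ w ∈ U ∪ V, ∃ z ∈ G.neighborSet v ∪ G.neighborSet u, G.Adj w z :=
  hg.2.2.2.2.2.2.2.2.1

theorem bU_nonpos (hg : GammaGood γ G u v U V) : bU γ G u U V ≤ 0 := hg.2.2.2.2.2.2.2.2.2.1

theorem bV_nonpos (hg : GammaGood γ G u v U V) : bV γ G v U V ≤ 0 := hg.2.2.2.2.2.2.2.2.2.2.1

theorem bU_add_bV_le (hg : GammaGood γ G u v U V) : bU γ G u U V + bV γ G v U V ≤ -2 :=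
  hg.2.2.2.2.2.2.2.2.2.2.2

theorem isBipartiteWith (hg : GammaGood γ G u v U V) : G.IsBipartiteWith U V := by
  obtain ⟨huv, -, -, hdisj, ⟨c, -, hc⟩, hcomp, hU, hV, -⟩ := hg
  have hmem : ∀ {a b}, G.Adj a b → a ∈ U ∪ V := fun {a b} hab => by
    rw [← hcomp]
    exact (hc _ ⟨a, b, hab, rfl⟩).trans (hc _ ⟨u, v, huv, rfl⟩).symm
  refine ⟨hdisj, fun a b hab => ?_⟩
  rcases hmem hab with ha | ha <;> rcases hmem hab.symm with hb | hb
  · exact absurd hab (hU a ha b hb)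
  · exact Or.inl ⟨ha, hb⟩
  · exact Or.inr ⟨ha, hb⟩
  · exact absurd hab (hV a ha b hb)

theorem of_isBipartiteWith (huv : G.Adj u v) (hu : u ∈ U) (hv : v ∈ V)
    (hbip : G.IsBipartiteWith U V)
    (hnbr : ∀ w ∈ U ∪ V, ∃ z ∈ G.neighborSet v ∪ G.neighborSet u, G.Adj w z)
    (hbU : bU γ G u U V ≤ 0) (hbV : bV γ G v U V ≤ 0)
    (hsum : bU γ G u U V + bV γ G v U V ≤ -2) : GammaGood γ G u v U V := by
  have hreach : ∀ w ∈ U ∪ V, G.Reachable w u := fun w hw =>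
    let ⟨_, hz, hwz⟩ := hnbr w hw
    reachable_of_adj_of_mem_neighborSet_union huv hz hwz
  refine ⟨huv, hu, hv, hbip.disjoint, ⟨G.connectedComponentMk u, ⟨u, v, huv, rfl⟩, ?_⟩,
    setOf_connectedComponentMk_eq_union hbip hu hreach, ?_, ?_, hnbr, hbU, hbV, hsum⟩
  · rintro c ⟨a, b, hab, rfl⟩
    exact ConnectedComponent.sound (hreach a (isBipartiteWith_support_subset hbip ⟨b, hab⟩))
  · exact fun a ha b hb hab =>
      hbip.disjoint.notMem_of_mem_left hb (hbip.mem_of_mem_adj ha hab)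
  · exact fun a ha b hb hab =>
      hbip.disjoint.notMem_of_mem_left (hbip.symm.mem_of_mem_adj ha hab) hb

protected theorem symm (hg : GammaGood γ G u v U V) : GammaGood γ G v u V U := by
  refine of_isBipartiteWith hg.adj.symm hg.right_mem hg.left_mem hg.isBipartiteWith.symm ?_
    hg.bV_nonpos hg.bU_nonpos ((add_comm _ _).trans_le hg.bU_add_bV_le)
  rw [Set.union_comm, Set.union_comm (G.neighborSet u)]
  exact hg.exists_adj_mem_neighborSet_union

theorem mono (hU : U.Finite) (hV : V.Finite) (hg : GammaGood γ G u v U V) (hGH : G ≤ H)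
    (hbip : H.IsBipartiteWith U V) : GammaGood γ H u v U V := by
  have hbU : bU γ H u U V ≤ bU γ G u U V := bU_anti hV hGH
  have hbV : bV γ H v U V ≤ bV γ G v U V := bU_anti hU hGH
  refine of_isBipartiteWith (hGH hg.adj) hg.left_mem hg.right_mem hbip (fun w hw => ?_)
    (hbU.trans hg.bU_nonpos) (hbV.trans hg.bV_nonpos) ((add_le_add hbU hbV).trans hg.bU_add_bV_le)
  obtain ⟨z, hz, hwz⟩ := hg.exists_adj_mem_neighborSet_union w hw
  exact ⟨z, hz.imp (fun h => hGH h) (fun h => hGH h), hGH hwz⟩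

protected theorem addEdge (hU : U.Finite) (hV : V.Finite) (hg : GammaGood γ G u v U V) (hx : x ∈ U)
    (hy : y ∈ V) : GammaGood γ (addEdge G x y) u v U V :=
  hg.mono hU hV le_addEdge (isBipartiteWith_addEdge hg.isBipartiteWith hx hy)

theorem of_subset_neighborSet (hγ : 1 < γ) (hU : U.Finite) (hV : V.Finite)
    (hbip : G.IsBipartiteWith U V) (hu : u ∈ U) (hv : v ∈ V) (hUv : U ⊆ G.neighborSet v)
    (hVu : V ⊆ G.neighborSet u) (hbU : bU γ G u U V ≤ 0) (hbV : bV γ G v U V ≤ 0) :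
    GammaGood γ G u v U V := by
  have huv : G.Adj u v := hVu hv
  refine of_isBipartiteWith huv hu hv hbip ?_ hbU hbV ?_
  · rintro w (hw | hw)
    · exact ⟨v, Or.inr huv, (hUv hw).symm⟩
    · exact ⟨u, Or.inl huv.symm, (hVu hw).symm⟩
  · rw [bV_eq_bU, bU_of_subset_neighborSet hVu, bU_of_subset_neighborSet hUv]
    have hU_amgm := two_le_mul_ncard_add_one_div hγ hU ⟨u, hu⟩
    have hV_amgm := two_le_mul_ncard_add_one_div hγ hV ⟨v, hv⟩
    linarith

theorem addEdge_insert_left (hγ : 1 < γ) (hU : U.Finite) (hV : V.Finite)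
    (hg : GammaGood γ G u v U V) (hUv : U ⊆ G.neighborSet v) (hVu : V ⊆ G.neighborSet u)
    (hcard : U.ncard ≤ V.ncard) (hzU : z ∉ U) (hzV : z ∉ V) :
    GammaGood γ (addEdge G z v) u v (insert z U) V := by
  have hzv : (addEdge G z v).Adj z v :=
    addEdge_adj_self (ne_of_mem_of_not_mem hg.right_mem hzV).symm
  have hbip : (addEdge G z v).IsBipartiteWith (insert z U) V :=
    isBipartiteWith_addEdge (isBipartiteWith_insert_left hg.isBipartiteWith hzV)
      (Set.mem_insert z U) hg.right_mem
  have hUv' : insert z U ⊆ (addEdge G z v).neighborSet v :=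
    Set.insert_subset hzv.symm fun _ hw => le_addEdge (hUv hw)
  have hVu' : V ⊆ (addEdge G z v).neighborSet u := fun _ hw => le_addEdge (hVu hw)
  have hcard_insert : ((insert z U).ncard : ℝ) = U.ncard + 1 := by
    exact_mod_cast Set.ncard_insert_of_notMem hzU hU
  refine of_subset_neighborSet hγ (hU.insert z) hV hbip (Set.mem_insert_of_mem z hg.left_mem)
    hg.right_mem hUv' hVu' ?_ ?_
  · rw [bU_of_subset_neighborSet hVu', hcard_insert]
    have hV_amgm := two_le_mul_ncard_add_one_div hγ hV ⟨v, hg.right_mem⟩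
    have hcard' : (U.ncard : ℝ) ≤ V.ncard := Nat.cast_le.2 hcard
    linarith
  · have hbV := hg.bV_nonpos
    rw [bV_eq_bU, bU_of_subset_neighborSet hUv] at hbV
    rw [bV_eq_bU, bU_of_subset_neighborSet hUv', hcard_insert]
    linarith

theorem notMem_of_isIsolated (hg : GammaGood γ G u v U V) (hz : G.IsIsolated z) : z ∉ U ∪ V := by
  intro hmem
  obtain ⟨w, -, hzw⟩ := hg.exists_adj_mem_neighborSet_union z hmem
  exact hz w hzw

end GammaGood

theorem stmt_15_general (hγ : 1 < γ) (hU : U.Finite) (hV : V.Finite)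
    (hg : GammaGood γ G u v U V) (hiso : ∃ z, G.IsIsolated z) :
    ∃ a b : α, a ≠ b ∧ ¬ G.Adj a b ∧
      ∃ U' V' : Set α, U ⊆ U' ∧ V ⊆ V' ∧ Disjoint U' V' ∧
        GammaGood γ (addEdge G a b) u v U' V' := by
  by_cases hcomplete : ∀ a ∈ U, ∀ b ∈ V, G.Adj a b
  · obtain ⟨z, hz⟩ := hiso
    obtain ⟨hzU, hzV⟩ := not_or.1 (hg.notMem_of_isIsolated hz)
    have hUv : U ⊆ G.neighborSet v := fun a ha => (hcomplete a ha v hg.right_mem).symm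
    have hVu : V ⊆ G.neighborSet u := fun b hb => hcomplete u hg.left_mem b hb
    rcases le_total U.ncard V.ncard with hcard | hcard
    · have hg' := hg.addEdge_insert_left hγ hU hV hUv hVu hcard hzU hzV
      exact ⟨z, v, (ne_of_mem_of_not_mem hg.right_mem hzV).symm, hz v, insert z U, V,
        Set.subset_insert z U, subset_rfl, hg'.isBipartiteWith.disjoint, hg'⟩
    · have hg' := (hg.symm.addEdge_insert_left hγ hV hU hVu hUv hcard hzV hzU).symm
      exact ⟨z, u, (ne_of_mem_of_not_mem hg.left_mem hzU).symm, hz u, U, insert z V,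
        subset_rfl, Set.subset_insert z V, hg'.isBipartiteWith.disjoint, hg'⟩
  · push Not at hcomplete
    obtain ⟨a, ha, b, hb, hab⟩ := hcomplete
    have hdisj := hg.isBipartiteWith.disjoint
    exact ⟨a, b, hdisj.ne_of_mem ha hb, hab, U, V, subset_rfl, subset_rfl, hdisj,
      hg.addEdge hU hV ha hb⟩

end

theorem stmt_15 {α : Type*} [Fintype α] (γ : ℝ) (hγ1 : 1 < γ) (hγ2 : γ ≤ 2)
    (G : SimpleGraph α) (u v : α) (U V : Set α)
    (hg : GammaGood γ G u v U V)
    (x y : α) (hx : x ∈ U) (hy : y ∈ V) (hxy : ¬ G.Adj x y)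
    (hiso : ∃ z : α, (addEdge G x y).neighborSet z = ∅) :
    ∃ a b : α, a ≠ b ∧ ¬ (addEdge G x y).Adj a b ∧
      ∃ U' V' : Set α, U ⊆ U' ∧ V ⊆ V' ∧ Disjoint U' V' ∧
        GammaGood γ (addEdge (addEdge G x y) a b) u v U' V' :=
  stmt_15_general hγ1 U.toFinite V.toFinite (hg.addEdge U.toFinite V.toFinite hx hy)
    (hiso.imp fun _ => (neighborSet_eq_empty _).1)
end
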